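/- There is a constant C>0 with the following property. Let R≥1, L>0, ℓ∈(0,1), η∈(0,1), c=(c₁,c₂)∈ℝ², and let Q_ℓ=(c₁−ℓ/2, c₁+ℓ/2)×(c₂−ℓ/2, c₂+ℓ/2). Suppose Q_ℓ ⊂ {(x₁,x₂)∈ℝ² : |x₁|≤R/2 and |x₂|≥ℓ^{-2}}. Then inf{𝓔_{L,R}(w) : w∈H¹₀(Q_ℓ;ℂ), extended by 0 outside Q_ℓ} ≤ L^{-2/3} ∫_{Q_ℓ} g((1+η) L^{2/3} |x₂|) dx₁ dx₂ + C L^{-2/3} ( ℓ^{-1} L^{1/3} + η^{-1} ℓ⁴ ) ℓ², where C is independent of ℓ, η, c, L and R. -/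

import Mathlib

open MeasureTheory Real Set Filter Topology

noncomputable section

/-- The open square `Q_r = (-r/2, r/2) × (-r/2, r/2)`. -/
def Qsq (r : ℝ) : Set (ℝ × ℝ) := Ioo (-r/2) (r/2) ×ˢ Ioo (-r/2) (r/2)

/-- The vertical strip `S_R = (-R/2, R/2) × ℝ`. -/
def Strip (R : ℝ) : Set (ℝ × ℝ) := Ioo (-R/2) (R/2) ×ˢ (univ : Set ℝ)

/-- The magnetic potential `A₀(x) = (-x₂/2, x₁/2)` of the constant unit magnetic field. -/
def A₀ (x : ℝ × ℝ) : ℝ × ℝ := (-x.2 / 2, x.1 / 2)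

/-- The magnetic potential `A_van(x) = (-x₂²/2, 0)` generating the field `B(x) = x₂`. -/
def Avan (x : ℝ × ℝ) : ℝ × ℝ := (-x.2 ^ 2 / 2, 0)

/-- The magnetic gradient energy density `|(∇ - iA)u|²` at `x`. -/
def magGradSq (A : ℝ × ℝ → ℝ × ℝ) (u : ℝ × ℝ → ℂ) (x : ℝ × ℝ) : ℝ :=
  ‖fderiv ℝ u x (1, 0) - Complex.I * ((A x).1 : ℂ) * u x‖ ^ 2 +
  ‖fderiv ℝ u x (0, 1) - Complex.I * ((A x).2 : ℂ) * u x‖ ^ 2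

/-- The Ginzburg–Landau functional `F_{b,Q_r}` on the square `Q_r`. -/
def Fsq (b r : ℝ) (u : ℝ × ℝ → ℂ) : ℝ :=
  ∫ x in Qsq r, (b * magGradSq A₀ u x - ‖u x‖ ^ 2 + ‖u x‖ ^ 4 / 2)

/-- (Smooth surrogate of) membership in `H¹(Q_r; ℂ)`. -/
def MemH1sq (u : ℝ × ℝ → ℂ) : Prop := ContDiff ℝ 1 u

/-- (Smooth surrogate of) membership in `H¹₀(Q_r; ℂ)`: vanishing on the boundary. -/
def MemH10sq (r : ℝ) (u : ℝ × ℝ → ℂ) : Prop :=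
  ContDiff ℝ 1 u ∧ ∀ x ∈ frontier (Qsq r), u x = 0

/-- The Dirichlet ground-state energy `e_D(b, r)`. -/
def eD (b r : ℝ) : ℝ := sInf (Fsq b r '' {u | MemH10sq r u})

/-- The Neumann ground-state energy `e_N(b, r)`. -/
def eN (b r : ℝ) : ℝ := sInf (Fsq b r '' {u | MemH1sq u})

/-- The energy density of the strip functional `𝓔_{L,R}` at `x`. -/
def stripDensity (L : ℝ) (u : ℝ × ℝ → ℂ) (x : ℝ × ℝ) : ℝ :=
  magGradSq Avan u x - L ^ (-(2:ℝ)/3) * ‖u x‖ ^ 2 + (L ^ (-(2:ℝ)/3) / 2) * ‖u x‖ ^ 4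

/-- The strip functional `𝓔_{L,R}`. -/
def Estrip (L R : ℝ) (u : ℝ × ℝ → ℂ) : ℝ := ∫ x in Strip R, stripDensity L u x

/-- (Surrogate of) membership in the space `H¹_{mag,0}(S_R)`. -/
def MemH1mag0 (R : ℝ) (u : ℝ × ℝ → ℂ) : Prop :=
  ContDiff ℝ 1 u ∧
  IntegrableOn (fun x => ‖u x‖ ^ 2) (Strip R) ∧
  IntegrableOn (magGradSq Avan u) (Strip R) ∧
  IntegrableOn (fun x => ‖u x‖ ^ 4) (Strip R) ∧
  ∀ x ∈ frontier (Strip R), u x = 0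

/-- The ground-state energy `e_gs(L; R)` of the strip functional. -/
def egs (L R : ℝ) : ℝ := sInf (Estrip L R '' {u | MemH1mag0 R u})

/-- `g : (0,∞) → ℝ` is the thermodynamic limit of the Dirichlet square energies. -/
def IsLimitG (g : ℝ → ℝ) : Prop :=
  ∀ b > 0, Tendsto (fun r => eD b r / r ^ 2) atTop (nhds (g b))

/-- `E : (0,∞) → ℝ` is the large-`R` limit of the strip energies. -/
def IsLimitE (E : ℝ → ℝ) : Prop :=
  ∀ L > 0, Tendsto (fun R => egs L R / R) atTop (nhds (E L))

/-!
Multiply a competitor on a huge square by the translates of a cut-off `χ` of a square of side `r`.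
After a magnetic translation each product is a competitor for `e_D(b, r)`, and averaging over all
translates costs only the kinetic energy of `χ`, because the cross terms carry `∫ χ ∂χ = 0`. Hence
`e_D(b, r) ≤ r² g(b) + C r √b`.

On `Q_ℓ` the field `x₂` differs by at most `ℓ` from its value `B` of smallest modulus. In a suitable
gauge `A_van` is then the potential of the constant field `B` up to `O(ℓ²)`, and Young's inequality
with parameter `η` turns a rescaled near-minimizer of `e_D((1 + η) L^{2/3} |B|, ℓ √|B|)` into a
competitor on `Q_ℓ`. Since `g` is monotone, `g((1 + η) L^{2/3} |B|)` is at most the average of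
`g((1 + η) L^{2/3} |x₂|)`. For `L ≥ 1` the error term dominates and the competitor `0` suffices.
-/

section Integration

theorem mul_measureReal_le_setIntegral {α : Type*} [MeasurableSpace α] {μ : Measure α}
    {f : α → ℝ} {s t : Set α} {γ : ℝ} (hγ : γ ≤ 0) (hs : MeasurableSet s) (ht : MeasurableSet t)
    (hst : s ⊆ t) (hμs : μ s ≠ ⊤) (hfs : ∀ x ∈ s, γ ≤ f x) (hft : ∀ x ∈ t \ s, 0 ≤ f x) :
    γ * μ.real s ≤ ∫ x in t, f x ∂μ := by
  by_cases hf : IntegrableOn f t μ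
  · have hs_int : Integrable (s.indicator fun _ ↦ γ) μ :=
      (integrable_indicator_iff hs).2 (integrableOn_const hμs)
    calc γ * μ.real s = ∫ x in t, s.indicator (fun _ ↦ γ) x ∂μ := by
          rw [setIntegral_indicator hs, inter_eq_self_of_subset_right hst, setIntegral_const,
            smul_eq_mul, mul_comm]
      _ ≤ ∫ x in t, f x ∂μ := by
          refine setIntegral_mono_on hs_int.integrableOn hf ht fun x hx ↦ ?_
          by_cases hxs : x ∈ s
          · simpa [hxs] using hfs x hxs
          · simpa [hxs] using hft x ⟨hx, hxs⟩
  · rw [integral_undef hf]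
    exact mul_nonpos_of_nonpos_of_nonneg hγ measureReal_nonneg

theorem integral_add_mul_sub_mul_add {α : Type*} [MeasurableSpace α] {μ : Measure α}
    {f₁ f₂ f₃ f₄ : α → ℝ} (h₁ : Integrable f₁ μ) (h₂ : Integrable f₂ μ) (h₃ : Integrable f₃ μ)
    (h₄ : Integrable f₄ μ) (a b : ℝ) :
    ∫ x, (f₁ x + a * (f₂ x - b * (f₃ x + f₄ x))) ∂μ =
      (∫ x, f₁ x ∂μ) + a * ((∫ x, f₂ x ∂μ) - b * ((∫ x, f₃ x ∂μ) + ∫ x, f₄ x ∂μ)) := by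
  have h_sum : Integrable (fun x ↦ b * (f₃ x + f₄ x)) μ := (h₃.add h₄).const_mul b
  have h_diff : Integrable (fun x ↦ f₂ x - b * (f₃ x + f₄ x)) μ := h₂.sub h_sum
  rw [integral_add h₁ (h_diff.const_mul a), integral_const_mul, integral_sub h₂ h_sum,
    integral_const_mul, integral_add h₃ h₄]

theorem integrable_integral_mul_comp_sub {G : Type*} [AddGroup G] [MeasurableSpace G]
    [MeasurableAdd₂ G] [MeasurableNeg G] {μ : Measure G} [SFinite μ] [μ.IsAddRightInvariant]
    {f h : G → ℝ} (hf : Integrable f μ) (hh : Integrable h μ) :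
    Integrable (fun s ↦ ∫ x, f x * h (s - x) ∂μ) μ :=
  hf.integrable_convolution (ContinuousLinearMap.mul ℝ ℝ) hh

theorem integral_integral_mul_comp_sub {G : Type*} [AddGroup G] [MeasurableSpace G]
    [MeasurableAdd₂ G] [MeasurableNeg G] {μ : Measure G} [SFinite μ] [μ.IsAddRightInvariant]
    {f h : G → ℝ} (hf : Integrable f μ) (hh : Integrable h μ) :
    ∫ s, ∫ x, f x * h (s - x) ∂μ ∂μ = (∫ x, f x ∂μ) * ∫ x, h x ∂μ :=
  integral_convolution (ContinuousLinearMap.mul ℝ ℝ) hf hh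

section LinearChangeOfVariables

variable {E F : Type*} [NormedAddCommGroup E] [NormedSpace ℝ E] [FiniteDimensional ℝ E]
  [MeasurableSpace E] [BorelSpace E] [NormedAddCommGroup F] (μ : Measure E) [μ.IsAddHaarMeasure]
  {T : E →ₗ[ℝ] E}

theorem measurableEmbedding_of_det_ne_zero (hT : LinearMap.det T ≠ 0) : MeasurableEmbedding T :=
  (T.equivOfDetNeZero hT).toContinuousLinearEquiv.toHomeomorph.measurableEmbedding

theorem integrable_comp_linearMap_sub (hT : LinearMap.det T ≠ 0) (c : E) {f : E → F}
    (hf : Integrable f μ) : Integrable (fun x ↦ f (T (x - c))) μ := by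
  refine Integrable.comp_sub_right (f := f ∘ T) ?_ c
  rw [← (measurableEmbedding_of_det_ne_zero hT).integrable_map_iff,
    Measure.map_linearMap_addHaar_eq_smul_addHaar μ hT]
  exact hf.smul_measure ENNReal.ofReal_ne_top

theorem integral_comp_linearMap_sub [NormedSpace ℝ F] (hT : LinearMap.det T ≠ 0) (c : E)
    (f : E → F) : ∫ x, f (T (x - c)) ∂μ = |(LinearMap.det T)⁻¹| • ∫ x, f x ∂μ := by
  rw [integral_sub_right_eq_self (fun x ↦ f (T x)) c,
    ← (measurableEmbedding_of_det_ne_zero hT).integral_map,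
    Measure.map_linearMap_addHaar_eq_smul_addHaar μ hT, integral_smul_measure,
    ENNReal.toReal_ofReal (abs_nonneg _)]

end LinearChangeOfVariables

end Integration

section TestFunctions

variable {E E' F : Type*} [NormedAddCommGroup E] [NormedSpace ℝ E] [NormedAddCommGroup E']
  [NormedSpace ℝ E'] [NormedAddCommGroup F] [NormedSpace ℝ F]

/-- The `C¹` functions with compact support in `Ω`: the class of test functions in which cut-offs,
minimizers and trial states are taken. -/
structure IsTestFunction (Ω : Set E) (f : E → F) : Prop where
  contDiff : ContDiff ℝ 1 f
  hasCompactSupport : HasCompactSupport f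
  tsupport_subset : tsupport f ⊆ Ω

namespace IsTestFunction

variable {Ω : Set E} {f : E → F}

theorem zero : IsTestFunction Ω (fun _ ↦ 0 : E → F) where
  contDiff := contDiff_const
  hasCompactSupport := HasCompactSupport.zero
  tsupport_subset := by simp [tsupport]

theorem continuous (hf : IsTestFunction Ω f) : Continuous f := hf.contDiff.continuous

theorem differentiable (hf : IsTestFunction Ω f) : Differentiable ℝ f :=
  hf.contDiff.differentiable one_ne_zero

theorem continuous_fderiv_apply (hf : IsTestFunction Ω f) (e : E) :
    Continuous fun x ↦ fderiv ℝ f x e :=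
  (hf.contDiff.continuous_fderiv one_ne_zero).clm_apply continuous_const

theorem notMem_tsupport (hf : IsTestFunction Ω f) {x : E} (hx : x ∉ Ω) : x ∉ tsupport f :=
  fun h ↦ hx (hf.tsupport_subset h)

theorem eq_zero (hf : IsTestFunction Ω f) {x : E} (hx : x ∉ Ω) : f x = 0 :=
  image_eq_zero_of_notMem_tsupport (hf.notMem_tsupport hx)

theorem fderiv_eq_zero (hf : IsTestFunction Ω f) {x : E} (hx : x ∉ Ω) : fderiv ℝ f x = 0 :=
  fderiv_of_notMem_tsupport (𝕜 := ℝ) (hf.notMem_tsupport hx)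

theorem smul {χ : E → ℝ} (hχ : IsTestFunction Ω χ) (hf : ContDiff ℝ 1 f) :
    IsTestFunction Ω fun x ↦ χ x • f x where
  contDiff := hχ.contDiff.smul hf
  hasCompactSupport := hχ.hasCompactSupport.smul_right
  tsupport_subset := by
    refine (closure_mono fun x hx ↦ ?_).trans hχ.tsupport_subset
    exact fun h ↦ hx (by simp [h])

theorem mul_left {w u : E → ℂ} (hw : ContDiff ℝ 1 w) (hu : IsTestFunction Ω u) :
    IsTestFunction Ω fun x ↦ w x * u x where
  contDiff := hw.mul hu.contDiff
  hasCompactSupport := hu.hasCompactSupport.mul_left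
  tsupport_subset := by
    refine (closure_mono fun x hx ↦ ?_).trans hu.tsupport_subset
    exact fun h ↦ hx (by simp [h])

theorem comp_homeomorph (hf : IsTestFunction Ω f) (e : E' ≃ₜ E) (he : ContDiff ℝ 1 e) :
    IsTestFunction (e ⁻¹' Ω) (fun x ↦ f (e x)) where
  contDiff := hf.contDiff.comp he
  hasCompactSupport := hf.hasCompactSupport.comp_homeomorph e
  tsupport_subset := (tsupport_comp_subset_preimage f e.continuous).trans
    (preimage_mono hf.tsupport_subset)

theorem mono {Ω' : Set E} (hf : IsTestFunction Ω f) (h : Ω ⊆ Ω') : IsTestFunction Ω' f where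
  contDiff := hf.contDiff
  hasCompactSupport := hf.hasCompactSupport
  tsupport_subset := hf.tsupport_subset.trans h

theorem integrable [MeasurableSpace E] [OpensMeasurableSpace E] {μ : Measure E}
    [IsFiniteMeasureOnCompacts μ] (hf : IsTestFunction Ω f) {h : E → ℝ} (hh : Continuous h)
    (hfh : ∀ x, f x = 0 → fderiv ℝ f x = 0 → h x = 0) : Integrable h μ := by
  refine hh.integrable_of_hasCompactSupport (.intro hf.hasCompactSupport fun x hx ↦ hfh x ?_ ?_)
  · exact image_eq_zero_of_notMem_tsupport hx
  · exact fderiv_of_notMem_tsupport (𝕜 := ℝ) hx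

theorem integral_mul_fderiv_self [FiniteDimensional ℝ E] [MeasurableSpace E] [BorelSpace E]
    {μ : Measure E} [μ.IsAddHaarMeasure] {χ : E → ℝ} (hχ : IsTestFunction Ω χ) (e : E) :
    ∫ x, χ x * fderiv ℝ χ x e ∂μ = 0 := by
  have h_cont := hχ.continuous_fderiv_apply e
  have h_neg : ∫ x, χ x * fderiv ℝ χ x e ∂μ = -∫ x, fderiv ℝ χ x e * χ x ∂μ :=
    integral_mul_fderiv_eq_neg_fderiv_mul_of_integrable
      (hχ.integrable (h_cont.mul hχ.continuous) fun x h _ ↦ by simp [h])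
      (hχ.integrable (hχ.continuous.mul h_cont) fun x h _ ↦ by simp [h])
      (hχ.integrable (hχ.continuous.mul hχ.continuous) fun x h _ ↦ by simp [h])
      (fun x _ ↦ hχ.differentiable x) (fun x _ ↦ hχ.differentiable x)
  simp_rw [mul_comm (fderiv ℝ χ _ e)] at h_neg
  linarith

end IsTestFunction

end TestFunctions

section CovariantDerivative

variable {E E' : Type*} [NormedAddCommGroup E] [NormedSpace ℝ E] [NormedAddCommGroup E']
  [NormedSpace ℝ E']

/-- The magnetic gradient `(∇ - iα) u` at `x`, as a real-linear map, for a magnetic potential given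
as a one-form `α` on a normed space. The one-form picture makes gauge changes and changes of
variables instances of a single formula, `covDeriv_cexp_mul_comp_apply`. -/
def covDeriv (α : E → E →L[ℝ] ℝ) (u : E → ℂ) (x : E) : E →L[ℝ] ℂ :=
  fderiv ℝ u x - (α x).smulRight (Complex.I * u x)

theorem covDeriv_apply (α : E → E →L[ℝ] ℝ) (u : E → ℂ) (x e : E) :
    covDeriv α u x e = fderiv ℝ u x e - α x e • (Complex.I * u x) :=
  rfl

theorem continuous_covDeriv {α : E → E →L[ℝ] ℝ} {u : E → ℂ} (hα : Continuous α)
    (hu : ContDiff ℝ 1 u) : Continuous (covDeriv α u) := by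
  have hu_cont := hu.continuous
  have hu_fderiv := hu.continuous_fderiv one_ne_zero
  unfold covDeriv
  exact hu_fderiv.sub <| (ContinuousLinearMap.smulRightL ℝ E ℂ).continuous.comp hα |>.clm_apply
    (continuous_const.mul hu_cont)

theorem covDeriv_smul (α : E → E →L[ℝ] ℝ) {χ : E → ℝ} {u : E → ℂ} {x : E}
    (hχ : DifferentiableAt ℝ χ x) (hu : DifferentiableAt ℝ u x) :
    covDeriv α (fun y ↦ χ y • u y) x =
      χ x • covDeriv α u x + (fderiv ℝ χ x).smulRight (u x) := by
  ext e
  rw [covDeriv_apply, fderiv_fun_smul hχ hu]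
  simp only [covDeriv_apply, add_apply, smul_apply, ContinuousLinearMap.smulRight_apply,
    Complex.real_smul]
  ring

theorem norm_covDeriv_smul_apply_sq (α : E → E →L[ℝ] ℝ) {χ : E → ℝ} {u : E → ℂ} {x : E}
    (hχ : DifferentiableAt ℝ χ x) (hu : DifferentiableAt ℝ u x) (e : E) :
    ‖covDeriv α (fun y ↦ χ y • u y) x e‖ ^ 2 =
      χ x ^ 2 * ‖covDeriv α u x e‖ ^ 2 + fderiv ℝ χ x e ^ 2 * ‖u x‖ ^ 2 +
        2 * (χ x * fderiv ℝ χ x e) * inner ℝ (covDeriv α u x e) (u x) := by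
  rw [covDeriv_smul α hχ hu, add_apply, smul_apply, ContinuousLinearMap.smulRight_apply,
    norm_add_sq_real, norm_smul, norm_smul, mul_pow, mul_pow, Real.norm_eq_abs, Real.norm_eq_abs,
    sq_abs, sq_abs, real_inner_smul_left, real_inner_smul_right]
  ring

theorem covDeriv_cexp_mul_comp_apply (α : E → E →L[ℝ] ℝ) (β : E' → E' →L[ℝ] ℝ) {φ : E → ℝ}
    {Y : E → E'} {v : E' → ℂ} {φ' : E →L[ℝ] ℝ} {Y' : E →L[ℝ] E'} {x : E}
    (hφ : HasFDerivAt φ φ' x) (hY : HasFDerivAt Y Y' x) (hv : DifferentiableAt ℝ v (Y x)) (e : E) :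
    covDeriv α (fun y ↦ Complex.exp (φ y * Complex.I) * v (Y y)) x e =
      Complex.exp (φ x * Complex.I) *
        (covDeriv β v (Y x) (Y' e) -
          (α x e - β (Y x) (Y' e) - φ' e) • (Complex.I * v (Y x))) := by
  have h_exp := ((Complex.ofRealCLM.hasFDerivAt.comp x hφ).mul_const Complex.I).cexp
  have h_deriv : HasFDerivAt (fun y ↦ Complex.exp (φ y * Complex.I) * v (Y y))
      (Complex.exp (φ x * Complex.I) •
        ((fderiv ℝ v (Y x)).comp Y' + φ'.smulRight (Complex.I * v (Y x)))) x := by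
    refine (h_exp.mul (hv.hasFDerivAt.comp x hY)).congr_fderiv ?_
    ext
    simp [smul_eq_mul]
    ring
  rw [covDeriv_apply, covDeriv_apply, h_deriv.fderiv]
  simp only [add_apply, smul_apply, ContinuousLinearMap.comp_apply, smul_eq_mul, Complex.real_smul,
    ContinuousLinearMap.smulRight_apply, Complex.ofReal_sub]
  ring

end CovariantDerivative

section EnergyDensity

/-- The one-form `A₁ dx₁ + A₂ dx₂` of the vector potential `A` on `ℝ²`. -/
def oneForm (A : ℝ × ℝ → ℝ × ℝ) (x : ℝ × ℝ) : ℝ × ℝ →L[ℝ] ℝ :=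
  (A x).1 • ContinuousLinearMap.fst ℝ ℝ ℝ + (A x).2 • ContinuousLinearMap.snd ℝ ℝ ℝ

/-- The density `b |(∇ - iA)u|² - |u|² + |u|⁴ / 2` of the Ginzburg–Landau functional. -/
def glDensity (A : ℝ × ℝ → ℝ × ℝ) (b : ℝ) (u : ℝ × ℝ → ℂ) (x : ℝ × ℝ) : ℝ :=
  b * magGradSq A u x - ‖u x‖ ^ 2 + ‖u x‖ ^ 4 / 2

/-- The squared Euclidean norm `|∇χ|²` of the gradient; the norm of `fderiv ℝ χ` itself is dual to
the sup norm of `ℝ × ℝ`. -/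
def gradSq (χ : ℝ × ℝ → ℝ) (x : ℝ × ℝ) : ℝ :=
  fderiv ℝ χ x (1, 0) ^ 2 + fderiv ℝ χ x (0, 1) ^ 2

variable {A : ℝ × ℝ → ℝ × ℝ} {b : ℝ} {u : ℝ × ℝ → ℂ} {x : ℝ × ℝ}

theorem oneForm_apply (A : ℝ × ℝ → ℝ × ℝ) (x e : ℝ × ℝ) :
    oneForm A x e = (A x).1 * e.1 + (A x).2 * e.2 :=
  rfl

theorem continuous_oneForm (hA : Continuous A) : Continuous (oneForm A) := by
  unfold oneForm
  fun_prop

theorem magGradSq_eq (A : ℝ × ℝ → ℝ × ℝ) (u : ℝ × ℝ → ℂ) (x : ℝ × ℝ) :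
    magGradSq A u x =
      ‖covDeriv (oneForm A) u x (1, 0)‖ ^ 2 + ‖covDeriv (oneForm A) u x (0, 1)‖ ^ 2 := by
  simp [magGradSq, covDeriv_apply, oneForm_apply, mul_assoc, mul_left_comm]

theorem magGradSq_nonneg (A : ℝ × ℝ → ℝ × ℝ) (u : ℝ × ℝ → ℂ) (x : ℝ × ℝ) :
    0 ≤ magGradSq A u x := by
  unfold magGradSq
  positivity

theorem magGradSq_le_two_mul_norm_sq (A : ℝ × ℝ → ℝ × ℝ) (u : ℝ × ℝ → ℂ) (x : ℝ × ℝ) :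
    magGradSq A u x ≤ 2 * ‖covDeriv (oneForm A) u x‖ ^ 2 := by
  have h_dir {e : ℝ × ℝ} (he : ‖e‖ ≤ 1) :
      ‖covDeriv (oneForm A) u x e‖ ^ 2 ≤ ‖covDeriv (oneForm A) u x‖ ^ 2 := by
    gcongr
    exact ContinuousLinearMap.unit_le_opNorm _ e he
  rw [magGradSq_eq, two_mul]
  exact add_le_add (h_dir (by simp)) (h_dir (by simp))

theorem gradSq_le_two_mul_norm_sq (χ : ℝ × ℝ → ℝ) (x : ℝ × ℝ) :
    gradSq χ x ≤ 2 * ‖fderiv ℝ χ x‖ ^ 2 := by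
  have h_dir {e : ℝ × ℝ} (he : ‖e‖ ≤ 1) : fderiv ℝ χ x e ^ 2 ≤ ‖fderiv ℝ χ x‖ ^ 2 := by
    rw [← sq_abs, ← Real.norm_eq_abs]
    gcongr
    exact ContinuousLinearMap.unit_le_opNorm _ e he
  rw [gradSq, two_mul]
  exact add_le_add (h_dir (by simp)) (h_dir (by simp))

theorem continuous_magGradSq (hA : Continuous A) (hu : ContDiff ℝ 1 u) :
    Continuous (magGradSq A u) := by
  have h_cov := continuous_covDeriv (continuous_oneForm hA) hu
  simp only [funext (magGradSq_eq A u)]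
  fun_prop

theorem continuous_glDensity (hA : Continuous A) (b : ℝ) (hu : ContDiff ℝ 1 u) :
    Continuous (glDensity A b u) := by
  have h_grad := continuous_magGradSq hA hu
  have h_cont := hu.continuous
  unfold glDensity
  fun_prop

theorem glDensity_eq_zero (A : ℝ × ℝ → ℝ × ℝ) (b : ℝ) (hu : u x = 0) (hu' : fderiv ℝ u x = 0) :
    glDensity A b u x = 0 := by
  simp [glDensity, magGradSq, hu, hu']

theorem neg_half_le_glDensity (A : ℝ × ℝ → ℝ × ℝ) (hb : 0 ≤ b) (u : ℝ × ℝ → ℂ) (x : ℝ × ℝ) :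
    -(1 / 2) ≤ glDensity A b u x := by
  have h_grad := mul_nonneg hb (magGradSq_nonneg A u x)
  unfold glDensity
  nlinarith [sq_nonneg (‖u x‖ ^ 2 - 1)]

theorem norm_sq_sub_two_le_glDensity (A : ℝ × ℝ → ℝ × ℝ) (hb : 0 ≤ b) (u : ℝ × ℝ → ℂ)
    (x : ℝ × ℝ) : ‖u x‖ ^ 2 - 2 ≤ glDensity A b u x := by
  have h_grad := mul_nonneg hb (magGradSq_nonneg A u x)
  unfold glDensity
  nlinarith [sq_nonneg (‖u x‖ ^ 2 - 2)]

theorem glDensity_mono {b' : ℝ} (hbb' : b ≤ b') : glDensity A b u x ≤ glDensity A b' u x := by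
  unfold glDensity
  gcongr
  exact magGradSq_nonneg A u x

theorem glDensity_smul_le (A : ℝ × ℝ → ℝ × ℝ) (b : ℝ) {χ : ℝ × ℝ → ℝ}
    (hχ : DifferentiableAt ℝ χ x) (hχ_abs : |χ x| ≤ 1) (hu : DifferentiableAt ℝ u x) :
    glDensity A b (fun y ↦ χ y • u y) x ≤
      χ x ^ 2 * glDensity A b u x + b * (gradSq χ x * ‖u x‖ ^ 2 +
        2 * (χ x * fderiv ℝ χ x (1, 0) * inner ℝ (covDeriv (oneForm A) u x (1, 0)) (u x) +
          χ x * fderiv ℝ χ x (0, 1) * inner ℝ (covDeriv (oneForm A) u x (0, 1)) (u x))) := by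
  have h_quartic : χ x ^ 4 * ‖u x‖ ^ 4 ≤ χ x ^ 2 * ‖u x‖ ^ 4 := by
    gcongr 1
    nlinarith [(sq_le_one_iff_abs_le_one (χ x)).2 hχ_abs, sq_nonneg (χ x)]
  rw [glDensity, glDensity, magGradSq_eq, magGradSq_eq, norm_covDeriv_smul_apply_sq _ hχ hu,
    norm_covDeriv_smul_apply_sq _ hχ hu, norm_smul, mul_pow, mul_pow, Real.norm_eq_abs, sq_abs,
    Even.pow_abs (by decide), gradSq]
  linarith

theorem stripDensity_eq {L : ℝ} (hL : 0 < L) (u : ℝ × ℝ → ℂ) (x : ℝ × ℝ) :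
    stripDensity L u x = L ^ (-(2 : ℝ) / 3) * glDensity Avan (L ^ ((2 : ℝ) / 3)) u x := by
  have h_inv : L ^ (-(2 : ℝ) / 3) * L ^ ((2 : ℝ) / 3) = 1 := by
    rw [← rpow_add hL]
    norm_num
  unfold stripDensity glDensity
  linear_combination -magGradSq Avan u x * h_inv

theorem continuous_A₀ : Continuous A₀ := by
  unfold A₀
  fun_prop

theorem continuous_Avan : Continuous Avan := by
  unfold Avan
  fun_prop

end EnergyDensity

section Squares

theorem Qsq_eq_ball (r : ℝ) : Qsq r = Metric.ball 0 (r / 2) := by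
  rw [Qsq, ← Prod.mk_zero_zero, ← ball_prod_same, Real.ball_eq_Ioo, zero_sub, zero_add, neg_div]

theorem Ioo_prod_Ioo_eq_ball (c : ℝ × ℝ) (ρ : ℝ) :
    Ioo (c.1 - ρ) (c.1 + ρ) ×ˢ Ioo (c.2 - ρ) (c.2 + ρ) = Metric.ball c ρ := by
  rw [← Prod.mk.eta (p := c), ← ball_prod_same, Real.ball_eq_Ioo, Real.ball_eq_Ioo]

theorem volume_real_ball_prod (c : ℝ × ℝ) {ρ : ℝ} (hρ : 0 ≤ ρ) :
    volume.real (Metric.ball c ρ) = (2 * ρ) ^ 2 := by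
  rw [← Prod.mk.eta (p := c), ← ball_prod_same, Measure.volume_eq_prod, measureReal_prod_prod,
    Real.volume_real_ball hρ, Real.volume_real_ball hρ, sq]

theorem Fsq_eq_setIntegral_ball (b r : ℝ) (u : ℝ × ℝ → ℂ) :
    Fsq b r u = ∫ x in Metric.ball 0 (r / 2), glDensity A₀ b u x := by
  rw [← Qsq_eq_ball]
  rfl

end Squares

section Cutoff

theorem lipschitzWith_mul_of_abs_le_one {X : Type*} [PseudoMetricSpace X] {f h : X → ℝ}
    {Kf Kh : NNReal} (hf : LipschitzWith Kf f) (hh : LipschitzWith Kh h) (hf_le : ∀ x, |f x| ≤ 1)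
    (hh_le : ∀ x, |h x| ≤ 1) : LipschitzWith (Kf + Kh) fun x ↦ f x * h x := by
  refine LipschitzWith.of_dist_le_mul fun x y ↦ ?_
  calc dist (f x * h x) (f y * h y) = |(f x - f y) * h x + f y * (h x - h y)| := by
        rw [Real.dist_eq]
        congr 1
        ring
    _ ≤ dist (f x) (f y) * 1 + 1 * dist (h x) (h y) := by
        refine (abs_add_le _ _).trans ?_
        rw [abs_mul, abs_mul, Real.dist_eq, Real.dist_eq]
        gcongr
        exacts [hh_le x, hf_le y]
    _ ≤ (Kf + Kh : NNReal) * dist x y := by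
        rw [mul_one, one_mul, NNReal.coe_add, add_mul]
        exact add_le_add (hf.dist_le_mul x y) (hh.dist_le_mul x y)

theorem exists_lipschitzWith_smoothTransition :
    ∃ K > 0, LipschitzWith K Real.smoothTransition := by
  have h_smooth : ContDiff ℝ 1 Real.smoothTransition := Real.smoothTransition.contDiff
  have h_supp : HasCompactSupport (deriv Real.smoothTransition) := by
    refine .intro (isCompact_Icc (a := (0 : ℝ)) (b := 1)) fun t ht ↦ ?_
    rcases not_and_or.1 ht with ht | ht <;> rw [not_le] at ht
    · have h_zero : Real.smoothTransition =ᶠ[𝓝 t] fun _ ↦ 0 := by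
        filter_upwards [Iio_mem_nhds ht] with s hs
        exact Real.smoothTransition.zero_of_nonpos hs.le
      simp [h_zero.deriv_eq]
    · have h_one : Real.smoothTransition =ᶠ[𝓝 t] fun _ ↦ 1 := by
        filter_upwards [Ioi_mem_nhds ht] with s hs
        exact Real.smoothTransition.one_of_one_le hs.le
      simp [h_one.deriv_eq]
  obtain ⟨K, hK⟩ := h_supp.exists_bound_of_continuous (h_smooth.continuous_deriv le_rfl)
  refine ⟨K.toNNReal + 1, by positivity, lipschitzWith_of_nnnorm_deriv_le
    (h_smooth.differentiable one_ne_zero) fun t ↦ ?_⟩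
  rw [← NNReal.coe_le_coe, NNReal.coe_add, coe_nnnorm, NNReal.coe_one]
  linarith [hK t, Real.le_coe_toNNReal K]

/-- `χ` is a `C¹` cut-off of the ball of radius `ρ` around the origin, equal to `1` except in a
layer of width `2δ` at the boundary, with gradient at most `K / δ`. -/
structure IsCutoff {E : Type*} [NormedAddCommGroup E] [NormedSpace ℝ E] (K ρ δ : ℝ) (χ : E → ℝ) :
    Prop extends IsTestFunction (Metric.ball 0 ρ) χ where
  mem_Icc : ∀ x, χ x ∈ Icc 0 1
  eq_one : ∀ x, ‖x‖ ≤ ρ - 2 * δ → χ x = 1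
  norm_fderiv_le : ∀ x, ‖fderiv ℝ χ x‖ ≤ K / δ

/-- A `C¹` function on the line with values in `[0, 1]` that is `1` for `|t| ≤ ρ - 2δ` and vanishes
for `|t| ≥ ρ - δ`; products of it are cut-offs of squares. -/
def cutoffProfile (ρ δ t : ℝ) : ℝ :=
  Real.smoothTransition ((ρ - t) / δ - 1) * Real.smoothTransition ((ρ + t) / δ - 1)

theorem contDiff_cutoffProfile (ρ δ : ℝ) : ContDiff ℝ 1 (cutoffProfile ρ δ) := by
  have h_smooth : ContDiff ℝ 1 Real.smoothTransition := Real.smoothTransition.contDiff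
  exact (h_smooth.comp (by fun_prop)).mul (h_smooth.comp (by fun_prop))

theorem cutoffProfile_mem_Icc (ρ δ t : ℝ) : cutoffProfile ρ δ t ∈ Icc 0 1 :=
  ⟨mul_nonneg (Real.smoothTransition.nonneg _) (Real.smoothTransition.nonneg _),
    mul_le_one₀ (Real.smoothTransition.le_one _) (Real.smoothTransition.nonneg _)
      (Real.smoothTransition.le_one _)⟩

theorem cutoffProfile_eq_one {ρ δ t : ℝ} (hδ : 0 < δ) (ht : |t| ≤ ρ - 2 * δ) :
    cutoffProfile ρ δ t = 1 := by
  obtain ⟨ht₁, ht₂⟩ := abs_le.1 ht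
  rw [cutoffProfile, Real.smoothTransition.one_of_one_le, Real.smoothTransition.one_of_one_le,
    one_mul]
  all_goals
    rw [le_sub_iff_add_le, le_div_iff₀ hδ]
    linarith

theorem cutoffProfile_eq_zero {ρ δ t : ℝ} (hδ : 0 < δ) (ht : ρ - δ ≤ |t|) :
    cutoffProfile ρ δ t = 0 := by
  rw [cutoffProfile]
  rcases le_abs.1 ht with ht | ht
  · rw [Real.smoothTransition.zero_of_nonpos, zero_mul]
    rw [sub_nonpos, div_le_one hδ]
    linarith
  · rw [mul_eq_zero]
    right
    rw [Real.smoothTransition.zero_of_nonpos]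
    rw [sub_nonpos, div_le_one hδ]
    linarith

theorem exists_lipschitzWith_cutoffProfile :
    ∃ K > 0, ∀ (ρ : ℝ) (δ : NNReal), LipschitzWith (K / δ) (cutoffProfile ρ δ) := by
  obtain ⟨K, hK_pos, hK⟩ := exists_lipschitzWith_smoothTransition
  refine ⟨K + K, by positivity, fun ρ δ ↦ ?_⟩
  have h_neg : LipschitzWith δ⁻¹ fun t ↦ (ρ - t) / δ - 1 := by
    refine .of_dist_le_mul fun s t ↦ ?_
    rw [Real.dist_eq, sub_sub_sub_cancel_right, ← sub_div, sub_sub_sub_cancel_left, abs_div,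
      NNReal.abs_eq, ← Real.dist_eq, dist_comm, NNReal.coe_inv, div_eq_inv_mul]
  have h_pos : LipschitzWith δ⁻¹ fun t ↦ (ρ + t) / δ - 1 := by
    refine .of_dist_le_mul fun s t ↦ ?_
    rw [Real.dist_eq, sub_sub_sub_cancel_right, ← sub_div, add_sub_add_left_eq_sub, abs_div,
      NNReal.abs_eq, ← Real.dist_eq, NNReal.coe_inv, div_eq_inv_mul]
  have h_abs (t : ℝ) : |Real.smoothTransition t| ≤ 1 := by
    rw [abs_of_nonneg (Real.smoothTransition.nonneg t)]
    exact Real.smoothTransition.le_one t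
  rw [add_div, div_eq_mul_inv]
  exact lipschitzWith_mul_of_abs_le_one (hK.comp h_neg) (hK.comp h_pos) (fun _ ↦ h_abs _)
    (fun _ ↦ h_abs _)

theorem exists_isCutoff :
    ∃ K > 0, ∀ ρ δ : ℝ, 0 < δ → ∃ χ : ℝ × ℝ → ℝ, IsCutoff K ρ δ χ := by
  obtain ⟨K, hK_pos, hK⟩ := exists_lipschitzWith_cutoffProfile
  refine ⟨K + K, by positivity, fun ρ δ hδ ↦ ?_⟩
  lift δ to NNReal using hδ.le
  set p := cutoffProfile ρ δ with hp
  have hp_mem (t : ℝ) : p t ∈ Icc 0 1 := cutoffProfile_mem_Icc ρ δ t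
  have hp_abs (t : ℝ) : |p t| ≤ 1 := abs_le.2 ⟨by linarith [(hp_mem t).1], (hp_mem t).2⟩
  have h_supp : tsupport (fun x : ℝ × ℝ ↦ p x.1 * p x.2) ⊆ Metric.closedBall 0 (ρ - δ) := by
    refine closure_minimal (fun x hx ↦ ?_) Metric.isClosed_closedBall
    obtain ⟨hx₁, hx₂⟩ := mul_ne_zero_iff.1 hx
    rw [mem_closedBall_zero_iff, Prod.norm_def, max_le_iff]
    exact ⟨le_of_not_ge fun h ↦ hx₁ (cutoffProfile_eq_zero hδ h),
      le_of_not_ge fun h ↦ hx₂ (cutoffProfile_eq_zero hδ h)⟩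
  have h_lip : LipschitzWith (K / δ * 1 + K / δ * 1) fun x : ℝ × ℝ ↦ p x.1 * p x.2 :=
    lipschitzWith_mul_of_abs_le_one ((hK ρ δ).comp LipschitzWith.prod_fst)
      ((hK ρ δ).comp LipschitzWith.prod_snd) (fun x ↦ hp_abs x.1) (fun x ↦ hp_abs x.2)
  refine ⟨fun x ↦ p x.1 * p x.2, ⟨?_, ?_, ?_⟩, fun x ↦ ?_, fun x hx ↦ ?_, fun x ↦ ?_⟩
  · exact ((contDiff_cutoffProfile ρ δ).comp contDiff_fst).mul
      ((contDiff_cutoffProfile ρ δ).comp contDiff_snd)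
  · exact (isCompact_closedBall 0 (ρ - δ)).of_isClosed_subset (isClosed_tsupport _) h_supp
  · exact h_supp.trans (Metric.closedBall_subset_ball (by linarith))
  · exact ⟨mul_nonneg (hp_mem _).1 (hp_mem _).1,
      mul_le_one₀ (hp_mem _).2 (hp_mem _).1 (hp_mem _).2⟩
  · rw [Prod.norm_def, max_le_iff] at hx
    simp only [hp]
    rw [cutoffProfile_eq_one hδ hx.1, cutoffProfile_eq_one hδ hx.2, one_mul]
  · refine (norm_fderiv_le_of_lipschitz ℝ h_lip).trans_eq ?_
    push_cast
    ring

end Cutoff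

namespace IsCutoff

variable {E : Type*} [NormedAddCommGroup E] [NormedSpace ℝ E] {K ρ δ : ℝ} {χ : E → ℝ}

theorem abs_le_one (hχ : IsCutoff K ρ δ χ) (x : E) : |χ x| ≤ 1 :=
  abs_le.2 ⟨by linarith [(hχ.mem_Icc x).1], (hχ.mem_Icc x).2⟩

theorem eventuallyEq_one (hχ : IsCutoff K ρ δ χ) {x : E} (hx : ‖x‖ < ρ - 2 * δ) :
    χ =ᶠ[𝓝 x] fun _ ↦ 1 := by
  filter_upwards [continuous_norm.continuousAt.eventually_lt_const hx] with y hy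
  exact hχ.eq_one y hy.le

theorem fderiv_eq_zero_of_norm_lt (hχ : IsCutoff K ρ δ χ) {x : E} (hx : ‖x‖ < ρ - 2 * δ) :
    fderiv ℝ χ x = 0 := by
  rw [(hχ.eventuallyEq_one hx).fderiv_eq, fderiv_fun_const, Pi.zero_apply]

theorem norm_covDeriv_smul_le (hχ : IsCutoff K ρ δ χ) (hδ : 0 < δ) (α : E → E →L[ℝ] ℝ)
    {u : E → ℂ} {x : E} (hu : DifferentiableAt ℝ u x) {M : ℝ} (hM : 0 ≤ M)
    (hux : ‖u x‖ ≤ M * (ρ - ‖x‖)) :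
    ‖covDeriv α (fun y ↦ χ y • u y) x‖ ≤ ‖covDeriv α u x‖ + 2 * K * M := by
  have hK : 0 ≤ K / δ := (norm_nonneg _).trans (hχ.norm_fderiv_le 0)
  have h_layer : ‖fderiv ℝ χ x‖ * ‖u x‖ ≤ 2 * K * M := by
    rcases lt_or_ge ‖x‖ (ρ - 2 * δ) with hx | hx
    · rw [hχ.fderiv_eq_zero_of_norm_lt hx, norm_zero, zero_mul, mul_assoc,
        ← div_mul_cancel₀ K hδ.ne']
      positivity
    · calc ‖fderiv ℝ χ x‖ * ‖u x‖ ≤ K / δ * (M * (2 * δ)) := by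
            gcongr
            · exact hχ.norm_fderiv_le x
            · exact hux.trans (by gcongr; linarith)
        _ = 2 * K * M := by field_simp
  rw [covDeriv_smul α (hχ.differentiable x) hu]
  refine (norm_add_le _ _).trans (add_le_add ?_ ?_)
  · rw [norm_smul]
    exact mul_le_of_le_one_left (norm_nonneg _) (hχ.abs_le_one x)
  · rwa [ContinuousLinearMap.norm_smulRight_apply]

variable [FiniteDimensional ℝ E] [MeasurableSpace E] [BorelSpace E] (μ : Measure E)
  [IsLocallyFiniteMeasure μ]

theorem measureReal_ball_le_integral_sq (hχ : IsCutoff K ρ δ χ) :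
    μ.real (Metric.ball 0 (ρ - 2 * δ)) ≤ ∫ x, χ x ^ 2 ∂μ := by
  have h_int : Integrable (fun x ↦ χ x ^ 2) μ :=
    hχ.integrable (hχ.continuous.pow 2) fun x hx _ ↦ by simp [hx]
  calc μ.real (Metric.ball 0 (ρ - 2 * δ)) = ∫ x in Metric.ball 0 (ρ - 2 * δ), χ x ^ 2 ∂μ := by
        rw [← setIntegral_one_eq_measureReal]
        refine setIntegral_congr_fun measurableSet_ball fun x hx ↦ ?_
        simp [hχ.eq_one x (mem_ball_zero_iff.1 hx).le]
    _ ≤ ∫ x, χ x ^ 2 ∂μ := setIntegral_le_integral h_int (ae_of_all _ fun x ↦ sq_nonneg _)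

theorem integral_norm_fderiv_sq_le (hχ : IsCutoff K ρ δ χ) (hδ : 0 ≤ δ) :
    ∫ x, ‖fderiv ℝ χ x‖ ^ 2 ∂μ ≤
      (K / δ) ^ 2 * (μ.real (Metric.ball 0 ρ) - μ.real (Metric.ball 0 (ρ - 2 * δ))) := by
  have : ProperSpace E := FiniteDimensional.proper ℝ E
  have h_cont := hχ.contDiff.continuous_fderiv one_ne_zero
  have h_int : Integrable (fun x ↦ ‖fderiv ℝ χ x‖ ^ 2) μ :=
    hχ.integrable (by fun_prop) fun x _ hx ↦ by simp [hx]
  have h_zero (x : E) (hx : x ∉ Metric.ball 0 ρ \ Metric.ball 0 (ρ - 2 * δ)) :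
      ‖fderiv ℝ χ x‖ ^ 2 = 0 := by
    by_cases hxρ : x ∈ Metric.ball 0 ρ
    · have hx_in : x ∈ Metric.ball 0 (ρ - 2 * δ) := by
        by_contra h
        exact hx ⟨hxρ, h⟩
      simp [hχ.fderiv_eq_zero_of_norm_lt (mem_ball_zero_iff.1 hx_in)]
    · simp [hχ.fderiv_eq_zero hxρ]
  rw [← setIntegral_eq_integral_of_forall_compl_eq_zero h_zero,
    ← measureReal_sdiff (Metric.ball_subset_ball (by linarith)) measurableSet_ball
      measure_ball_lt_top.ne,
    mul_comm ((K / δ) ^ 2), ← smul_eq_mul (μ.real _), ← setIntegral_const]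
  refine setIntegral_mono_on h_int.integrableOn
    (integrableOn_const (measure_ne_top_of_subset sdiff_subset measure_ball_lt_top.ne))
    (measurableSet_ball.diff measurableSet_ball) fun x _ ↦ ?_
  gcongr
  exact hχ.norm_fderiv_le x

end IsCutoff

section Approximation

theorem exists_mem_sphere_norm_sub_eq {E : Type*} [NormedAddCommGroup E] [NormedSpace ℝ E]
    [Nontrivial E] {ρ : ℝ} {x : E} (hx : x ∈ Metric.closedBall 0 ρ) :
    ∃ y ∈ Metric.sphere (0 : E) ρ, ‖y - x‖ = ρ - ‖x‖ := by
  rw [mem_closedBall_zero_iff] at hx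
  have hρ : 0 ≤ ρ := (norm_nonneg x).trans hx
  rcases eq_or_ne x 0 with rfl | hx₀
  · obtain ⟨y, hy⟩ := exists_norm_eq E hρ
    exact ⟨y, by simpa using hy, by simpa using hy⟩
  · have hx_pos : 0 < ‖x‖ := norm_pos_iff.2 hx₀
    refine ⟨(ρ / ‖x‖) • x, ?_, ?_⟩
    · rw [mem_sphere_zero_iff_norm, norm_smul, norm_div, norm_norm, Real.norm_of_nonneg hρ,
        div_mul_cancel₀ _ hx_pos.ne']
    · have h_factor : (ρ / ‖x‖) • x - x = (ρ / ‖x‖ - 1) • x := by rw [sub_smul, one_smul]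
      rw [h_factor, norm_smul, Real.norm_of_nonneg (sub_nonneg.2 ((one_le_div hx_pos).2 hx)),
        sub_mul, one_mul, div_mul_cancel₀ _ hx_pos.ne']

theorem norm_le_mul_sub_norm_of_eq_zero_on_sphere {E F : Type*} [NormedAddCommGroup E]
    [NormedSpace ℝ E] [Nontrivial E] [NormedAddCommGroup F] [NormedSpace ℝ F] {u : E → F}
    {ρ M : ℝ} (hu : ∀ x ∈ Metric.closedBall 0 ρ, DifferentiableAt ℝ u x)
    (hM : ∀ x ∈ Metric.closedBall 0 ρ, ‖fderiv ℝ u x‖ ≤ M) (hu₀ : ∀ x ∈ Metric.sphere 0 ρ, u x = 0)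
    {x : E} (hx : x ∈ Metric.closedBall 0 ρ) : ‖u x‖ ≤ M * (ρ - ‖x‖) := by
  obtain ⟨y, hy, hyx⟩ := exists_mem_sphere_norm_sub_eq hx
  have h_mvt := (convex_closedBall (0 : E) ρ).norm_image_sub_le_of_norm_fderiv_le hu hM hx
    (Metric.sphere_subset_closedBall hy)
  rwa [hu₀ y hy, zero_sub, norm_neg, hyx] at h_mvt

theorem abs_glDensity_le (A : ℝ × ℝ → ℝ × ℝ) (b : ℝ) (u : ℝ × ℝ → ℂ) (x : ℝ × ℝ) :
    |glDensity A b u x| ≤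
      |b| * (2 * ‖covDeriv (oneForm A) u x‖ ^ 2) + ‖u x‖ ^ 2 + ‖u x‖ ^ 4 / 2 := by
  refine (abs_add_le _ _).trans (add_le_add ((abs_sub _ _).trans ?_) ?_)
  · rw [abs_mul, abs_of_nonneg (magGradSq_nonneg A u x), abs_of_nonneg (sq_nonneg ‖u x‖)]
    gcongr
    exact magGradSq_le_two_mul_norm_sq A u x
  · exact (abs_of_nonneg (by positivity)).le

theorem glDensity_congr {A : ℝ × ℝ → ℝ × ℝ} {b : ℝ} {u v : ℝ × ℝ → ℂ} {x : ℝ × ℝ}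
    (huv : u =ᶠ[𝓝 x] v) : glDensity A b u x = glDensity A b v x := by
  simp only [glDensity, magGradSq, huv.fderiv_eq, huv.eq_of_nhds]

theorem eventually_glDensity_smul_cutoff_eq {K ρ : ℝ} {χ : ℝ → ℝ × ℝ → ℝ}
    (hχ : ∀ δ > 0, IsCutoff K ρ δ (χ δ)) {x : ℝ × ℝ} (hx : ‖x‖ < ρ) (A : ℝ × ℝ → ℝ × ℝ) (b : ℝ)
    (u : ℝ × ℝ → ℂ) :
    ∀ᶠ δ in 𝓝[>] 0, glDensity A b (fun y ↦ χ δ y • u y) x = glDensity A b u x := by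
  have h_cont : ContinuousAt (fun δ : ℝ ↦ ρ - 2 * δ) 0 := by fun_prop
  filter_upwards [nhdsWithin_le_nhds (h_cont.eventually_const_lt (by simpa using hx)),
    self_mem_nhdsWithin] with δ hxδ hδ
  refine glDensity_congr ?_
  filter_upwards [(hχ δ hδ).eventuallyEq_one hxδ] with y hy
  rw [hy, one_smul]

theorem exists_abs_glDensity_smul_cutoff_le {R K : ℝ} (hR : 0 < R) {u : ℝ × ℝ → ℂ}
    (hu : MemH10sq R u) {A : ℝ × ℝ → ℝ × ℝ} (hA : Continuous A) (b : ℝ) :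
    ∃ D, ∀ δ > 0, ∀ χ : ℝ × ℝ → ℝ, IsCutoff K (R / 2) δ χ → ∀ x ∈ Metric.ball 0 (R / 2),
      |glDensity A b (fun y ↦ χ y • u y) x| ≤ D := by
  have h_cpt : IsCompact (Metric.closedBall (0 : ℝ × ℝ) (R / 2)) := isCompact_closedBall 0 _
  have h_sub : Metric.ball (0 : ℝ × ℝ) (R / 2) ⊆ Metric.closedBall 0 (R / 2) :=
    Metric.ball_subset_closedBall
  have hu_diff : Differentiable ℝ u := hu.1.differentiable one_ne_zero
  obtain ⟨M, hM⟩ := h_cpt.exists_bound_of_continuousOn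
    (hu.1.continuous_fderiv one_ne_zero).continuousOn
  obtain ⟨B, hB⟩ := h_cpt.exists_bound_of_continuousOn
    (continuous_covDeriv (continuous_oneForm hA) hu.1).continuousOn
  obtain ⟨N, hN⟩ := h_cpt.exists_bound_of_continuousOn hu.1.continuous.continuousOn
  have hM₀ : 0 ≤ M := (norm_nonneg _).trans (hM 0 (Metric.mem_closedBall_self (by positivity)))
  have hu₀ : ∀ x ∈ Metric.sphere 0 (R / 2), u x = 0 := by
    rw [← frontier_ball _ (by positivity), ← Qsq_eq_ball]
    exact hu.2
  refine ⟨|b| * (2 * (B + 2 * K * M) ^ 2) + N ^ 2 + N ^ 4 / 2, fun δ hδ χ hχ x hx ↦ ?_⟩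
  have h_cov := hχ.norm_covDeriv_smul_le hδ (oneForm A) (hu_diff x) hM₀
    (norm_le_mul_sub_norm_of_eq_zero_on_sphere (fun x _ ↦ hu_diff x) hM hu₀ (h_sub hx))
  have h_norm : ‖χ x • u x‖ ≤ N := by
    rw [norm_smul]
    exact (mul_le_of_le_one_left (norm_nonneg _) (hχ.abs_le_one x)).trans (hN x (h_sub hx))
  refine (abs_glDensity_le _ _ _ _).trans ?_
  gcongr
  exact h_cov.trans (by gcongr; exact hB x (h_sub hx))

theorem tendsto_Fsq_smul_cutoff {b R K : ℝ} (hR : 0 < R) {u : ℝ × ℝ → ℂ} (hu : MemH10sq R u)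
    {χ : ℝ → ℝ × ℝ → ℝ} (hχ : ∀ δ > 0, IsCutoff K (R / 2) δ (χ δ)) :
    Tendsto (fun δ ↦ Fsq b R fun x ↦ χ δ x • u x) (𝓝[>] 0) (𝓝 (Fsq b R u)) := by
  obtain ⟨D, hD⟩ := exists_abs_glDensity_smul_cutoff_le (K := K) hR hu continuous_A₀ b
  simp only [Fsq_eq_setIntegral_ball]
  refine tendsto_integral_filter_of_dominated_convergence (fun _ ↦ D) ?_ ?_
    (integrableOn_const measure_ball_lt_top.ne) ?_
  · filter_upwards [self_mem_nhdsWithin] with δ hδ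
    exact (continuous_glDensity continuous_A₀ b ((hχ δ hδ).contDiff.smul hu.1)).aestronglyMeasurable
  · filter_upwards [self_mem_nhdsWithin] with δ hδ
    exact (ae_restrict_iff' measurableSet_ball).2 (ae_of_all _ (hD δ hδ (χ δ) (hχ δ hδ)))
  · refine (ae_restrict_iff' measurableSet_ball).2 (ae_of_all _ fun x hx ↦ ?_)
    refine tendsto_const_nhds.congr' ?_
    exact (eventually_glDensity_smul_cutoff_eq hχ (mem_ball_zero_iff.1 hx) A₀ b u).mono
      fun δ hδ ↦ hδ.symm

theorem nonempty_setOf_memH10sq (r : ℝ) : {u | MemH10sq r u}.Nonempty :=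
  ⟨fun _ ↦ 0, contDiff_const, fun _ _ ↦ rfl⟩

theorem exists_isTestFunction_Fsq_lt {b r a : ℝ} (hr : 0 < r) (ha : eD b r < a) :
    ∃ v : ℝ × ℝ → ℂ, IsTestFunction (Metric.ball 0 (r / 2)) v ∧ Fsq b r v < a := by
  obtain ⟨_, ⟨u, hu, rfl⟩, hua⟩ :=
    exists_lt_of_csInf_lt ((nonempty_setOf_memH10sq r).image (Fsq b r)) ha
  obtain ⟨K, -, hK⟩ := exists_isCutoff
  choose! χ hχ using hK (r / 2)
  obtain ⟨δ, hδa, hδ⟩ := ((tendsto_Fsq_smul_cutoff hr hu hχ).eventually_lt_const hua |>.and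
    self_mem_nhdsWithin).exists
  exact ⟨_, (hχ δ hδ).toIsTestFunction.smul hu.1, hδa⟩

end Approximation

section DirichletEnergy

variable {b r : ℝ}

theorem IsTestFunction.integrable_glDensity {Ω : Set (ℝ × ℝ)} {v : ℝ × ℝ → ℂ}
    (hv : IsTestFunction Ω v) {A : ℝ × ℝ → ℝ × ℝ} (hA : Continuous A) (b : ℝ) :
    Integrable (glDensity A b v) :=
  hv.integrable (continuous_glDensity hA b hv.contDiff) fun _ h h' ↦ glDensity_eq_zero A b h h'

theorem IsTestFunction.Fsq_eq_integral {v : ℝ × ℝ → ℂ}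
    (hv : IsTestFunction (Metric.ball 0 (r / 2)) v) (b : ℝ) :
    Fsq b r v = ∫ x, glDensity A₀ b v x := by
  rw [Fsq_eq_setIntegral_ball]
  exact setIntegral_eq_integral_of_forall_compl_eq_zero fun x hx ↦
    glDensity_eq_zero A₀ b (hv.eq_zero hx) (hv.fderiv_eq_zero hx)

theorem IsTestFunction.memH10sq {v : ℝ × ℝ → ℂ}
    (hv : IsTestFunction (Metric.ball 0 (r / 2)) v) : MemH10sq r v := by
  refine ⟨hv.contDiff, fun x hx ↦ hv.eq_zero fun hx' ↦ ?_⟩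
  rw [Qsq_eq_ball] at hx
  exact disjoint_left.1 (disjoint_frontier_iff_isOpen.2 Metric.isOpen_ball) hx hx'

theorem neg_half_mul_sq_le_Fsq (hb : 0 ≤ b) (hr : 0 ≤ r) (u : ℝ × ℝ → ℂ) :
    -(1 / 2) * r ^ 2 ≤ Fsq b r u := by
  rw [Fsq_eq_setIntegral_ball]
  refine (mul_measureReal_le_setIntegral (by norm_num) measurableSet_ball measurableSet_ball
    subset_rfl measure_ball_lt_top.ne (fun x _ ↦ neg_half_le_glDensity A₀ hb u x)
    (by simp)).trans' ?_
  rw [volume_real_ball_prod 0 (by positivity), mul_div_cancel₀ r two_ne_zero]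

theorem bddBelow_Fsq_image (hb : 0 ≤ b) (hr : 0 ≤ r) :
    BddBelow (Fsq b r '' {u | MemH10sq r u}) :=
  ⟨-(1 / 2) * r ^ 2, forall_mem_image.2 fun u _ ↦ neg_half_mul_sq_le_Fsq hb hr u⟩

theorem neg_half_mul_sq_le_eD (hb : 0 ≤ b) (hr : 0 ≤ r) : -(1 / 2) * r ^ 2 ≤ eD b r :=
  le_csInf ((nonempty_setOf_memH10sq r).image _) <|
    forall_mem_image.2 fun u _ ↦ neg_half_mul_sq_le_Fsq hb hr u

theorem eD_le_Fsq (hb : 0 ≤ b) (hr : 0 ≤ r) {u : ℝ × ℝ → ℂ} (hu : MemH10sq r u) :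
    eD b r ≤ Fsq b r u :=
  csInf_le (bddBelow_Fsq_image hb hr) ⟨u, hu, rfl⟩

theorem eD_nonpos (hb : 0 ≤ b) (hr : 0 ≤ r) : eD b r ≤ 0 := by
  have hz : IsTestFunction (Metric.ball 0 (r / 2)) fun _ : ℝ × ℝ ↦ (0 : ℂ) := .zero
  refine (eD_le_Fsq hb hr hz.memH10sq).trans_eq ?_
  rw [hz.Fsq_eq_integral, integral_eq_zero_of_ae (.of_forall fun x ↦ ?_)]
  exact glDensity_eq_zero A₀ b rfl (by simp)

theorem eD_mono {b' : ℝ} (hb : 0 ≤ b) (hbb' : b ≤ b') (hr : 0 ≤ r) : eD b r ≤ eD b' r := by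
  refine le_csInf ((nonempty_setOf_memH10sq r).image _) (forall_mem_image.2 fun u hu ↦ ?_)
  refine (eD_le_Fsq hb hr hu).trans ?_
  have h_int (b : ℝ) : IntegrableOn (glDensity A₀ b u) (Metric.ball 0 (r / 2)) :=
    ((continuous_glDensity continuous_A₀ b hu.1).continuousOn.integrableOn_compact
      (isCompact_closedBall 0 (r / 2))).mono_set Metric.ball_subset_closedBall
  rw [Fsq_eq_setIntegral_ball, Fsq_eq_setIntegral_ball]
  exact setIntegral_mono (h_int b) (h_int b') fun x ↦ glDensity_mono hbb'

end DirichletEnergy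

section MagneticTranslation

/-- The magnetic translate of `u` by `s`: the translation `u (· + s)`, corrected by the gauge
factor under which the potential `A₀` is invariant. -/
def magTranslate (s : ℝ × ℝ) (u : ℝ × ℝ → ℂ) (y : ℝ × ℝ) : ℂ :=
  Complex.exp (((-oneForm A₀ s) y : ℝ) * Complex.I) * u (y + s)

theorem covDeriv_magTranslate_apply {u : ℝ × ℝ → ℂ} (s y : ℝ × ℝ)
    (hu : DifferentiableAt ℝ u (y + s)) (e : ℝ × ℝ) :
    covDeriv (oneForm A₀) (magTranslate s u) y e =
      Complex.exp (((-oneForm A₀ s) y : ℝ) * Complex.I) *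
        covDeriv (oneForm A₀) u (y + s) e := by
  have h_gauge : oneForm A₀ y e - oneForm A₀ (y + s) e - (-oneForm A₀ s) e = 0 := by
    simp only [oneForm_apply, A₀, neg_apply, Prod.fst_add, Prod.snd_add]
    ring
  have h_shift : HasFDerivAt (fun z ↦ z + s) (ContinuousLinearMap.id ℝ (ℝ × ℝ)) y :=
    (hasFDerivAt_id y).add_const s
  have h := covDeriv_cexp_mul_comp_apply (oneForm A₀) (oneForm A₀)
    (-oneForm A₀ s).hasFDerivAt h_shift hu e
  rwa [ContinuousLinearMap.id_apply, h_gauge, zero_smul, sub_zero] at h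

theorem glDensity_magTranslate {b : ℝ} {u : ℝ × ℝ → ℂ} (s y : ℝ × ℝ)
    (hu : DifferentiableAt ℝ u (y + s)) :
    glDensity A₀ b (magTranslate s u) y = glDensity A₀ b u (y + s) := by
  simp only [glDensity, magGradSq_eq, covDeriv_magTranslate_apply s y hu, norm_mul,
    Complex.norm_exp_ofReal_mul_I, one_mul, magTranslate]

theorem IsTestFunction.magTranslate {Ω : Set (ℝ × ℝ)} {u : ℝ × ℝ → ℂ} (hu : IsTestFunction Ω u)
    (s : ℝ × ℝ) : IsTestFunction ((· + s) ⁻¹' Ω) (magTranslate s u) :=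
  .mul_left ((Complex.ofRealCLM.contDiff.comp (-oneForm A₀ s).contDiff).mul contDiff_const).cexp
    (hu.comp_homeomorph (Homeomorph.addRight s) (contDiff_id.add contDiff_const))

theorem eD_le_integral_glDensity {b r : ℝ} (hb : 0 ≤ b) (hr : 0 ≤ r) {s : ℝ × ℝ} {v : ℝ × ℝ → ℂ}
    (hv : IsTestFunction (Metric.ball s (r / 2)) v) : eD b r ≤ ∫ x, glDensity A₀ b v x := by
  have h_test : IsTestFunction (Metric.ball 0 (r / 2)) (magTranslate s v) := by
    simpa using hv.magTranslate s
  calc eD b r ≤ ∫ y, glDensity A₀ b (magTranslate s v) y :=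
        (eD_le_Fsq hb hr h_test.memH10sq).trans_eq (h_test.Fsq_eq_integral b)
    _ = ∫ y, glDensity A₀ b v (y + s) := by
        simp only [glDensity_magTranslate s _ (hv.differentiable _)]
    _ = ∫ x, glDensity A₀ b v x := integral_add_right_eq_self _ s

end MagneticTranslation

section Averaging

variable {A : ℝ × ℝ → ℝ × ℝ} {b r R : ℝ} {χ : ℝ × ℝ → ℝ} {u : ℝ × ℝ → ℂ}

/-- The inner product `⟨(∂ₑ - i Aₑ) u, u⟩`, which multiplies `χ ∂ₑχ` in the energy density of
`χ u`. -/
def crossDensity (A : ℝ × ℝ → ℝ × ℝ) (u : ℝ × ℝ → ℂ) (e x : ℝ × ℝ) : ℝ :=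
  inner ℝ (covDeriv (oneForm A) u x e) (u x)

/-- An upper bound for the energy of `χ (s - ·) u`, in which each term is the convolution at `s` of
a density of `u` and a density of `χ`. -/
def cutoffEnergyBound (A : ℝ × ℝ → ℝ × ℝ) (b : ℝ) (χ : ℝ × ℝ → ℝ) (u : ℝ × ℝ → ℂ)
    (s : ℝ × ℝ) : ℝ :=
  (∫ x, glDensity A b u x * χ (s - x) ^ 2) +
    b * ((∫ x, ‖u x‖ ^ 2 * gradSq χ (s - x)) -
      2 * ((∫ x, crossDensity A u (1, 0) x * (χ (s - x) * fderiv ℝ χ (s - x) (1, 0))) +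
        ∫ x, crossDensity A u (0, 1) x * (χ (s - x) * fderiv ℝ χ (s - x) (0, 1))))

theorem continuous_crossDensity (hA : Continuous A) (hu : ContDiff ℝ 1 u) (e : ℝ × ℝ) :
    Continuous (crossDensity A u e) :=
  ((continuous_covDeriv (continuous_oneForm hA) hu).clm_apply continuous_const).inner hu.continuous

theorem IsTestFunction.continuous_gradSq {Ω : Set (ℝ × ℝ)} (hχ : IsTestFunction Ω χ) :
    Continuous (gradSq χ) :=
  ((hχ.continuous_fderiv_apply _).pow 2).add ((hχ.continuous_fderiv_apply _).pow 2)

theorem fderiv_comp_const_sub_apply (hχ : Differentiable ℝ χ) (s x e : ℝ × ℝ) :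
    fderiv ℝ (fun y ↦ χ (s - y)) x e = -fderiv ℝ χ (s - x) e := by
  have h := (hχ (s - x)).hasFDerivAt.comp x ((hasFDerivAt_id x).const_sub s)
  exact (congrArg (fun T : ℝ × ℝ →L[ℝ] ℝ ↦ T e) h.fderiv).trans (by simp)

theorem glDensity_smul_comp_const_sub_le (A : ℝ × ℝ → ℝ × ℝ) (b : ℝ) (hχ : Differentiable ℝ χ)
    (hχ_abs : ∀ y, |χ y| ≤ 1) (hu : Differentiable ℝ u) (s x : ℝ × ℝ) :
    glDensity A b (fun y ↦ χ (s - y) • u y) x ≤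
      glDensity A b u x * χ (s - x) ^ 2 + b * (‖u x‖ ^ 2 * gradSq χ (s - x) -
        2 * (crossDensity A u (1, 0) x * (χ (s - x) * fderiv ℝ χ (s - x) (1, 0)) +
          crossDensity A u (0, 1) x * (χ (s - x) * fderiv ℝ χ (s - x) (0, 1)))) := by
  have h_diff : Differentiable ℝ fun y ↦ χ (s - y) := hχ.comp (differentiable_id.const_sub s)
  refine (glDensity_smul_le A b (h_diff x) (hχ_abs _) (hu x)).trans_eq ?_
  simp only [gradSq, crossDensity, fderiv_comp_const_sub_apply hχ]
  ring

theorem integral_glDensity_smul_comp_const_sub_le {Ω Ω' : Set (ℝ × ℝ)} (hA : Continuous A)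
    (hχ : IsTestFunction Ω χ) (hχ_abs : ∀ y, |χ y| ≤ 1) (hu : IsTestFunction Ω' u) (s : ℝ × ℝ) :
    ∫ x, glDensity A b (fun y ↦ χ (s - y) • u y) x ≤ cutoffEnergyBound A b χ u s := by
  have h_sub : Continuous (s - · : ℝ × ℝ → ℝ × ℝ) := continuous_sub_left s
  have h_energy : Integrable fun x ↦ glDensity A b u x * χ (s - x) ^ 2 :=
    hu.integrable ((continuous_glDensity hA b hu.contDiff).mul ((hχ.continuous.comp h_sub).pow 2))
      fun x h h' ↦ by simp [glDensity_eq_zero A b h h']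
  have h_grad : Integrable fun x ↦ ‖u x‖ ^ 2 * gradSq χ (s - x) :=
    hu.integrable ((hu.continuous.norm.pow 2).mul (hχ.continuous_gradSq.comp h_sub))
      fun x h _ ↦ by simp [h]
  have h_cross (e : ℝ × ℝ) :
      Integrable fun x ↦ crossDensity A u e x * (χ (s - x) * fderiv ℝ χ (s - x) e) :=
    hu.integrable ((continuous_crossDensity hA hu.contDiff e).mul
      ((hχ.continuous.mul (hχ.continuous_fderiv_apply e)).comp h_sub))
      fun x h _ ↦ by simp [crossDensity, h]
  have h_test : IsTestFunction Ω' fun x ↦ χ (s - x) • u x := by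
    simp_rw [Complex.real_smul]
    exact hu.mul_left (Complex.ofRealCLM.contDiff.comp
      (hχ.contDiff.comp (contDiff_const.sub contDiff_id)))
  calc ∫ x, glDensity A b (fun y ↦ χ (s - y) • u y) x
      ≤ ∫ x, (glDensity A b u x * χ (s - x) ^ 2 + b * (‖u x‖ ^ 2 * gradSq χ (s - x) -
          2 * (crossDensity A u (1, 0) x * (χ (s - x) * fderiv ℝ χ (s - x) (1, 0)) +
            crossDensity A u (0, 1) x * (χ (s - x) * fderiv ℝ χ (s - x) (0, 1))))) :=
        integral_mono (h_test.integrable_glDensity hA b)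
          (h_energy.add ((h_grad.sub
            (((h_cross (1, 0)).add (h_cross (0, 1))).const_mul 2)).const_mul b))
          (glDensity_smul_comp_const_sub_le A b hχ.differentiable hχ_abs hu.differentiable s)
    _ = cutoffEnergyBound A b χ u s :=
        integral_add_mul_sub_mul_add h_energy h_grad (h_cross (1, 0)) (h_cross (0, 1)) b 2

theorem integral_cutoffEnergyBound {Ω Ω' : Set (ℝ × ℝ)} (hA : Continuous A)
    (hχ : IsTestFunction Ω χ) (hu : IsTestFunction Ω' u) :
    ∫ s, cutoffEnergyBound A b χ u s =
      (∫ x, glDensity A b u x) * (∫ x, χ x ^ 2) +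
        b * ((∫ x, ‖u x‖ ^ 2) * ∫ x, gradSq χ x) := by
  have h_energy := hu.integrable_glDensity hA b
  have h_norm : Integrable fun x ↦ ‖u x‖ ^ 2 :=
    hu.integrable (hu.continuous.norm.pow 2) fun x h _ ↦ by simp [h]
  have h_cross (e : ℝ × ℝ) : Integrable (crossDensity A u e) :=
    hu.integrable (continuous_crossDensity hA hu.contDiff e) fun x h _ ↦ by simp [crossDensity, h]
  have hχ_sq : Integrable fun x ↦ χ x ^ 2 :=
    hχ.integrable (hχ.continuous.pow 2) fun x h _ ↦ by simp [h]
  have hχ_grad : Integrable (gradSq χ) :=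
    hχ.integrable hχ.continuous_gradSq fun x _ h ↦ by simp [gradSq, h]
  have hχ_cross (e : ℝ × ℝ) : Integrable fun x ↦ χ x * fderiv ℝ χ x e :=
    hχ.integrable (hχ.continuous.mul (hχ.continuous_fderiv_apply e)) fun x h _ ↦ by simp [h]
  have h_conv (e : ℝ × ℝ) := integrable_integral_mul_comp_sub (h_cross e) (hχ_cross e)
  unfold cutoffEnergyBound
  rw [integral_add_mul_sub_mul_add (integrable_integral_mul_comp_sub h_energy hχ_sq)
      (integrable_integral_mul_comp_sub h_norm hχ_grad) (h_conv (1, 0)) (h_conv (0, 1)),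
    integral_integral_mul_comp_sub h_energy hχ_sq, integral_integral_mul_comp_sub h_norm hχ_grad,
    integral_integral_mul_comp_sub (h_cross _) (hχ_cross _),
    integral_integral_mul_comp_sub (h_cross _) (hχ_cross _), hχ.integral_mul_fderiv_self,
    hχ.integral_mul_fderiv_self]
  ring

theorem eD_le_cutoffEnergyBound (hb : 0 ≤ b) (hr : 0 ≤ r)
    (hχ : IsTestFunction (Metric.ball 0 (r / 2)) χ) (hχ_abs : ∀ y, |χ y| ≤ 1)
    {Ω : Set (ℝ × ℝ)} (hu : IsTestFunction Ω u) (s : ℝ × ℝ) :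
    eD b r ≤ cutoffEnergyBound A₀ b χ u s := by
  have h_test : IsTestFunction (Metric.ball s (r / 2)) fun x ↦ χ (s - x) • u x := by
    refine IsTestFunction.smul ?_ hu.contDiff
    refine (hχ.comp_homeomorph (Homeomorph.subLeft s) (contDiff_const.sub contDiff_id)).mono ?_
    intro x hx
    rwa [mem_preimage, Homeomorph.coe_subLeft, mem_ball_zero_iff, ← dist_eq_norm, dist_comm] at hx
  exact (eD_le_integral_glDensity hb hr h_test).trans
    (integral_glDensity_smul_comp_const_sub_le continuous_A₀ hχ hχ_abs hu s)

theorem cutoffEnergyBound_nonneg (hA : Continuous A)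
    (hχ : IsTestFunction (Metric.ball 0 (r / 2)) χ) (hχ_abs : ∀ y, |χ y| ≤ 1)
    (hu : IsTestFunction (Metric.ball 0 (R / 2)) u) {s : ℝ × ℝ}
    (hs : s ∉ Metric.ball 0 ((R + r) / 2)) : 0 ≤ cutoffEnergyBound A b χ u s := by
  have h_zero : (fun x ↦ χ (s - x) • u x) = fun _ ↦ 0 := by
    funext x
    by_cases hx : x ∈ Metric.ball 0 (R / 2)
    · rw [hχ.eq_zero fun hsx ↦ hs ?_, zero_smul]
      rw [mem_ball_zero_iff] at *
      linarith [norm_sub_norm_le s x]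
    · rw [hu.eq_zero hx, smul_zero]
  refine (integral_eq_zero_of_ae (.of_forall fun x ↦ ?_)).ge.trans
    (integral_glDensity_smul_comp_const_sub_le hA hχ hχ_abs hu s)
  rw [h_zero]
  exact glDensity_eq_zero A b rfl (by simp)

theorem mul_eD_le_integral_mul_Fsq_add (hb : 0 ≤ b) (hr : 0 ≤ r) (hR : 0 ≤ R)
    (hχ : IsTestFunction (Metric.ball 0 (r / 2)) χ) (hχ_abs : ∀ y, |χ y| ≤ 1)
    (hu : IsTestFunction (Metric.ball 0 (R / 2)) u) :
    eD b r * (R + r) ^ 2 ≤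
      Fsq b R u * (∫ x, χ x ^ 2) + b * ((∫ x, ‖u x‖ ^ 2) * ∫ x, gradSq χ x) := by
  have h := mul_measureReal_le_setIntegral (μ := volume) (eD_nonpos hb hr) measurableSet_ball .univ
    (subset_univ (Metric.ball (0 : ℝ × ℝ) ((R + r) / 2))) measure_ball_lt_top.ne
    (fun s _ ↦ eD_le_cutoffEnergyBound hb hr hχ hχ_abs hu s)
    fun s hs ↦ cutoffEnergyBound_nonneg continuous_A₀ hχ hχ_abs hu hs.2
  rwa [volume_real_ball_prod 0 (by positivity), mul_div_cancel₀ _ two_ne_zero, setIntegral_univ,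
    integral_cutoffEnergyBound continuous_A₀ hχ hu, ← hu.Fsq_eq_integral] at h

end Averaging

theorem IsTestFunction.integral_norm_sq_le_Fsq_add {b R : ℝ} {u : ℝ × ℝ → ℂ} (hb : 0 ≤ b)
    (hR : 0 ≤ R) (hu : IsTestFunction (Metric.ball 0 (R / 2)) u) :
    ∫ x, ‖u x‖ ^ 2 ≤ Fsq b R u + 2 * R ^ 2 := by
  have h_norm : Integrable fun x ↦ ‖u x‖ ^ 2 :=
    hu.integrable (hu.continuous.norm.pow 2) fun x h _ ↦ by simp [h]
  have h_two : IntegrableOn (fun _ ↦ (2 : ℝ)) (Metric.ball (0 : ℝ × ℝ) (R / 2)) :=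
    integrableOn_const measure_ball_lt_top.ne
  have h_sub : ∫ x in Metric.ball 0 (R / 2), (‖u x‖ ^ 2 - 2) = (∫ x, ‖u x‖ ^ 2) - 2 * R ^ 2 := by
    rw [integral_sub h_norm.integrableOn h_two, setIntegral_const,
      volume_real_ball_prod 0 (by positivity), mul_div_cancel₀ R two_ne_zero, smul_eq_mul,
      mul_comm, setIntegral_eq_integral_of_forall_compl_eq_zero]
    intro x hx
    simp [hu.eq_zero hx]
  rw [← sub_le_iff_le_add, ← h_sub, Fsq_eq_setIntegral_ball]
  exact setIntegral_mono (h_norm.integrableOn.sub h_two)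
    (hu.integrable_glDensity continuous_A₀ b).integrableOn
    (norm_sq_sub_two_le_glDensity A₀ hb u)

namespace IsLimitG

variable {g : ℝ → ℝ} {b r : ℝ}

theorem neg_half_le (hg : IsLimitG g) (hb : 0 < b) : -(1 / 2) ≤ g b := by
  refine ge_of_tendsto (hg b hb) ?_
  filter_upwards [eventually_gt_atTop 0] with R hR
  rw [le_div_iff₀ (by positivity)]
  exact neg_half_mul_sq_le_eD hb.le hR.le

theorem nonpos (hg : IsLimitG g) (hb : 0 < b) : g b ≤ 0 := by
  refine le_of_tendsto (hg b hb) ?_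
  filter_upwards [eventually_ge_atTop 0] with R hR
  exact div_nonpos_of_nonpos_of_nonneg (eD_nonpos hb.le hR) (sq_nonneg R)

theorem mono {b' : ℝ} (hg : IsLimitG g) (hb : 0 < b) (hbb' : b ≤ b') : g b ≤ g b' := by
  refine le_of_tendsto_of_tendsto (hg b hb) (hg b' (hb.trans_le hbb')) ?_
  filter_upwards [eventually_ge_atTop 0] with R hR
  exact div_le_div_of_nonneg_right (eD_mono hb.le hbb' hR) (sq_nonneg R)

theorem eD_le_mul_integral_sq_add (hg : IsLimitG g) (hb : 0 < b) (hr : 0 ≤ r) {χ : ℝ × ℝ → ℝ}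
    (hχ : IsTestFunction (Metric.ball 0 (r / 2)) χ) (hχ_abs : ∀ y, |χ y| ≤ 1) :
    eD b r ≤ g b * (∫ x, χ x ^ 2) + 2 * b * ∫ x, gradSq χ x := by
  set I := ∫ x, χ x ^ 2
  set J := ∫ x, gradSq χ x
  have : 0 ≤ I := integral_nonneg fun x ↦ sq_nonneg _
  have hJ : 0 ≤ J := integral_nonneg fun x ↦ add_nonneg (sq_nonneg _) (sq_nonneg _)
  have h_ratio {R : ℝ} (hR : 0 < R) : eD b r * (1 + r * R⁻¹) ^ 2 ≤
      (eD b R / R ^ 2 + R⁻¹ ^ 2) * I + b * ((eD b R / R ^ 2 + R⁻¹ ^ 2 + 2) * J) := by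
    obtain ⟨u, hu, hu_lt⟩ := exists_isTestFunction_Fsq_lt hR (lt_add_one (eD b R))
    have h_avg : eD b r * (R + r) ^ 2 ≤
        (eD b R + 1) * I + b * ((eD b R + 1 + 2 * R ^ 2) * J) := by
      refine (mul_eD_le_integral_mul_Fsq_add hb.le hr hR.le hχ hχ_abs hu).trans ?_
      gcongr
      exact (hu.integral_norm_sq_le_Fsq_add hb.le hR.le).trans (by gcongr)
    calc eD b r * (1 + r * R⁻¹) ^ 2 = eD b r * (R + r) ^ 2 / R ^ 2 := by
          field_simp
      _ ≤ ((eD b R + 1) * I + b * ((eD b R + 1 + 2 * R ^ 2) * J)) / R ^ 2 := by gcongr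
      _ = _ := by field_simp
  have h_inv : Tendsto (fun R : ℝ ↦ R⁻¹) atTop (𝓝 0) := tendsto_inv_atTop_zero
  have h_left : Tendsto (fun R ↦ eD b r * (1 + r * R⁻¹) ^ 2) atTop (𝓝 (eD b r)) := by
    simpa using (((h_inv.const_mul r).const_add 1).pow 2).const_mul (eD b r)
  have h_energy : Tendsto (fun R ↦ eD b R / R ^ 2 + R⁻¹ ^ 2) atTop (𝓝 (g b)) := by
    simpa using (hg b hb).add (h_inv.pow 2)
  have h_limit : eD b r ≤ g b * I + b * ((g b + 2) * J) := by
    refine le_of_tendsto_of_tendsto h_left ((h_energy.mul_const I).add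
      (((h_energy.add_const 2).mul_const J).const_mul b)) ?_
    filter_upwards [eventually_gt_atTop 0] with R hR using h_ratio hR
  have h_gJ : b * (g b * J) ≤ 0 :=
    mul_nonpos_of_nonneg_of_nonpos hb.le (mul_nonpos_of_nonpos_of_nonneg (hg.nonpos hb) hJ)
  linarith

theorem eD_le_sq_mul_add_of_isCutoff {K δ : ℝ} (hg : IsLimitG g) (hb : 0 < b) (hδ : 0 < δ)
    (hδr : 4 * δ ≤ r) {χ : ℝ × ℝ → ℝ} (hχ : IsCutoff K (r / 2) δ χ) :
    eD b r ≤ r ^ 2 * g b + (4 + 32 * K ^ 2 * b / δ ^ 2) * (r * δ) := by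
  have hr : 0 ≤ r := by linarith
  have h_vol : volume.real (Metric.ball (0 : ℝ × ℝ) (r / 2)) = r ^ 2 := by
    rw [volume_real_ball_prod 0 (by positivity), mul_div_cancel₀ r two_ne_zero]
  have h_vol_inner :
      volume.real (Metric.ball (0 : ℝ × ℝ) (r / 2 - 2 * δ)) = r ^ 2 - 8 * r * δ + 16 * δ ^ 2 := by
    rw [volume_real_ball_prod 0 (by linarith)]
    ring
  have h_sq : r ^ 2 - 8 * r * δ ≤ ∫ x, χ x ^ 2 := by
    linarith [hχ.measureReal_ball_le_integral_sq volume, sq_nonneg δ]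
  have h_grad : ∫ x, gradSq χ x ≤ 2 * ((K / δ) ^ 2 * (8 * r * δ)) := by
    have hχ_fderiv := hχ.contDiff.continuous_fderiv one_ne_zero
    calc ∫ x, gradSq χ x ≤ ∫ x, 2 * ‖fderiv ℝ χ x‖ ^ 2 :=
          integral_mono
            (hχ.integrable hχ.toIsTestFunction.continuous_gradSq fun x _ h ↦ by simp [gradSq, h])
            (hχ.integrable (by fun_prop) fun x _ h ↦ by simp [h]) (gradSq_le_two_mul_norm_sq χ)
      _ ≤ 2 * ((K / δ) ^ 2 * (8 * r * δ)) := by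
          rw [integral_const_mul]
          gcongr
          refine (hχ.integral_norm_fderiv_sq_le volume hδ.le).trans ?_
          rw [h_vol, h_vol_inner]
          gcongr
          linarith [sq_nonneg δ]
  calc eD b r ≤ g b * (∫ x, χ x ^ 2) + 2 * b * ∫ x, gradSq χ x :=
        hg.eD_le_mul_integral_sq_add hb hr hχ.toIsTestFunction hχ.abs_le_one
    _ ≤ g b * (r ^ 2 - 8 * r * δ) + 2 * b * (2 * ((K / δ) ^ 2 * (8 * r * δ))) := by
        gcongr ?_ + 2 * b * ?_
        exact mul_le_mul_of_nonpos_left h_sq (hg.nonpos hb)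
    _ = r ^ 2 * g b + (-(g b) * 8 + 32 * K ^ 2 * b / δ ^ 2) * (r * δ) := by
        field_simp
        ring
    _ ≤ r ^ 2 * g b + (4 + 32 * K ^ 2 * b / δ ^ 2) * (r * δ) := by
        gcongr
        linarith [hg.neg_half_le hb]

theorem eD_le_sq_mul_add_of_le {δ : ℝ} (hg : IsLimitG g) (hb : 0 < b) (hr : 0 ≤ r)
    (hδr : r ≤ 4 * δ) : eD b r ≤ r ^ 2 * g b + 2 * (r * δ) := by
  have h_g := mul_le_mul_of_nonneg_left (hg.neg_half_le hb) (sq_nonneg r)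
  linarith [eD_nonpos hb.le hr, mul_le_mul_of_nonneg_left hδr hr]

end IsLimitG

theorem exists_eD_le_sq_mul_add : ∃ C > 0, ∀ g : ℝ → ℝ, IsLimitG g → ∀ b > 0, ∀ r ≥ 0,
    eD b r ≤ r ^ 2 * g b + C * (r * √b) := by
  obtain ⟨K, -, hK⟩ := exists_isCutoff
  refine ⟨4 + 32 * K ^ 2, by positivity, fun g hg b hb r hr ↦ ?_⟩
  have hδ : 0 < √b := Real.sqrt_pos.2 hb
  rcases le_total r (4 * √b) with hrb | hrb
  · refine (hg.eD_le_sq_mul_add_of_le hb hr hrb).trans ?_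
    gcongr
    linarith [sq_nonneg K]
  · obtain ⟨χ, hχ⟩ := hK (r / 2) (√b) hδ
    refine (hg.eD_le_sq_mul_add_of_isCutoff hb hδ hrb hχ).trans_eq ?_
    rw [Real.sq_sqrt hb.le, mul_div_cancel_right₀ _ hb.ne']

section TrialState

theorem norm_sub_sq_le_of_pos {E : Type*} [SeminormedAddCommGroup E] {η : ℝ} (hη : 0 < η)
    (p q : E) : ‖p - q‖ ^ 2 ≤ (1 + η) * ‖p‖ ^ 2 + (1 + η⁻¹) * ‖q‖ ^ 2 := by
  calc ‖p - q‖ ^ 2 ≤ (‖p‖ + ‖q‖) ^ 2 := by gcongr; exact norm_sub_le p q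
    _ ≤ (1 + η) * ‖p‖ ^ 2 + (1 + η⁻¹) * ‖q‖ ^ 2 := by
      linarith [two_mul_le_add_mul_sq (a := ‖p‖) (b := ‖q‖) hη, add_sq ‖p‖ ‖q‖]

/-- The linear map `(x₁, x₂) ↦ (k x₁, κ x₂)`. It transforms a constant magnetic field `1` into
`k κ`, so that `|k| = |κ|` with opposite signs gives a negative field. -/
def scaleMap (k κ : ℝ) : ℝ × ℝ →L[ℝ] ℝ × ℝ :=
  (k • ContinuousLinearMap.id ℝ ℝ).prodMap (κ • ContinuousLinearMap.id ℝ ℝ)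

/-- The phase `φ` for which `A_van - ∇φ` agrees, up to the remainder of `covDeriv_trialState_apply`,
with the potential `B A₀(· - c)` of the constant field `B`. -/
def gaugePhase (B : ℝ) (c x : ℝ × ℝ) : ℝ :=
  -(c.2 ^ 2 / 2) * (x.1 - c.1) - B / 2 * ((x.1 - c.1) * (x.2 - c.2))

/-- The state `v`, centred at `c` and rescaled to the constant magnetic field `k κ`, in the gauge
adapted to `A_van`. -/
def trialState (k κ : ℝ) (c : ℝ × ℝ) (v : ℝ × ℝ → ℂ) (x : ℝ × ℝ) : ℂ :=
  Complex.exp (gaugePhase (k * κ) c x * Complex.I) * v (scaleMap k κ (x - c))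

variable {k κ ℓ η m : ℝ} {c : ℝ × ℝ} {v : ℝ × ℝ → ℂ}

theorem scaleMap_apply (k κ : ℝ) (x : ℝ × ℝ) : scaleMap k κ x = (k * x.1, κ * x.2) := rfl

theorem det_scaleMap (k κ : ℝ) : LinearMap.det (scaleMap k κ : ℝ × ℝ →ₗ[ℝ] ℝ × ℝ) = k * κ := by
  rw [scaleMap, ContinuousLinearMap.coe_prodMap, LinearMap.det_prodMap]
  simp

theorem norm_scaleMap (hκ : |κ| = k) (x : ℝ × ℝ) : ‖scaleMap k κ x‖ = k * ‖x‖ := by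
  have hk : 0 ≤ k := hκ ▸ abs_nonneg κ
  rw [scaleMap_apply, Prod.norm_mk, Prod.norm_def, norm_mul, norm_mul, Real.norm_of_nonneg hk,
    Real.norm_eq_abs κ, hκ, mul_max_of_nonneg _ _ hk]

theorem norm_trialState (k κ : ℝ) (c : ℝ × ℝ) (v : ℝ × ℝ → ℂ) (x : ℝ × ℝ) :
    ‖trialState k κ c v x‖ = ‖v (scaleMap k κ (x - c))‖ := by
  rw [trialState, norm_mul, Complex.norm_exp_ofReal_mul_I, one_mul]

theorem contDiff_gaugePhase (B : ℝ) (c : ℝ × ℝ) : ContDiff ℝ 1 (gaugePhase B c) := by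
  unfold gaugePhase
  fun_prop

theorem hasFDerivAt_gaugePhase (B : ℝ) (c x : ℝ × ℝ) :
    HasFDerivAt (gaugePhase B c)
      (oneForm (fun y ↦ (-(c.2 ^ 2 / 2) - B / 2 * (y.2 - c.2), -(B / 2 * (y.1 - c.1)))) x) x := by
  have h₁ : HasFDerivAt (fun y : ℝ × ℝ ↦ y.1 - c.1) (ContinuousLinearMap.fst ℝ ℝ ℝ) x :=
    hasFDerivAt_fst.sub_const _
  have h₂ : HasFDerivAt (fun y : ℝ × ℝ ↦ y.2 - c.2) (ContinuousLinearMap.snd ℝ ℝ ℝ) x :=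
    hasFDerivAt_snd.sub_const _
  refine ((h₁.const_mul (-(c.2 ^ 2 / 2))).sub ((h₁.mul h₂).const_mul (B / 2))).congr_fderiv ?_
  ext <;> simp [oneForm]

theorem covDeriv_trialState_apply (k κ : ℝ) (c x e : ℝ × ℝ)
    (hv : DifferentiableAt ℝ v (scaleMap k κ (x - c))) :
    covDeriv (oneForm Avan) (trialState k κ c v) x e =
      Complex.exp (gaugePhase (k * κ) c x * Complex.I) *
        (covDeriv (oneForm A₀) v (scaleMap k κ (x - c)) (scaleMap k κ e) -
          (((k * κ - c.2) * (x.2 - c.2) - (x.2 - c.2) ^ 2 / 2) * e.1) •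
            (Complex.I * v (scaleMap k κ (x - c)))) := by
  have h_scale : HasFDerivAt (fun y ↦ scaleMap k κ (y - c)) (scaleMap k κ) x :=
    (scaleMap k κ).hasFDerivAt.comp x ((hasFDerivAt_id x).sub_const c)
  refine (covDeriv_cexp_mul_comp_apply (oneForm Avan) (oneForm A₀)
    (hasFDerivAt_gaugePhase (k * κ) c x) h_scale hv e).trans ?_
  congr 3
  simp only [oneForm_apply, Avan, A₀, scaleMap_apply, Prod.fst_sub, Prod.snd_sub]
  ring

theorem sq_gauge_remainder_le {B t y : ℝ} (hB : |t - B| ≤ ℓ / 2) (hy : |y| ≤ ℓ / 2) :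
    ((B - t) * y - y ^ 2 / 2) ^ 2 ≤ ℓ ^ 4 / 4 := by
  have hℓ : 0 ≤ ℓ / 2 := (abs_nonneg y).trans hy
  have h_abs : |(B - t) * y - y ^ 2 / 2| ≤ ℓ ^ 2 / 2 := by
    calc |(B - t) * y - y ^ 2 / 2| ≤ |(B - t) * y| + |y ^ 2 / 2| := abs_sub _ _
      _ = |t - B| * |y| + |y| ^ 2 / 2 := by rw [abs_mul, abs_sub_comm, abs_div, abs_pow, abs_two]
      _ ≤ ℓ / 2 * (ℓ / 2) + (ℓ / 2) ^ 2 / 2 := by gcongr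
      _ ≤ ℓ ^ 2 / 2 := by linarith [sq_nonneg ℓ]
  calc ((B - t) * y - y ^ 2 / 2) ^ 2 = |(B - t) * y - y ^ 2 / 2| ^ 2 := (sq_abs _).symm
    _ ≤ (ℓ ^ 2 / 2) ^ 2 := by gcongr
    _ = ℓ ^ 4 / 4 := by ring

theorem magGradSq_trialState_le (hη : 0 < η) (hκ : |κ| = k) (x : ℝ × ℝ)
    (hv : DifferentiableAt ℝ v (scaleMap k κ (x - c))) :
    magGradSq Avan (trialState k κ c v) x ≤
      (1 + η) * k ^ 2 * magGradSq A₀ v (scaleMap k κ (x - c)) +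
        (1 + η⁻¹) * (((k * κ - c.2) * (x.2 - c.2) - (x.2 - c.2) ^ 2 / 2) ^ 2 *
          ‖v (scaleMap k κ (x - c))‖ ^ 2) := by
  have h₁ : scaleMap k κ (1, 0) = k • (1, 0) := by simp [scaleMap_apply]
  have h₂ : scaleMap k κ (0, 1) = κ • (0, 1) := by simp [scaleMap_apply]
  have hκ_sq : κ ^ 2 = k ^ 2 := by rw [← hκ, sq_abs]
  rw [magGradSq_eq, magGradSq_eq, covDeriv_trialState_apply k κ c x _ hv,
    covDeriv_trialState_apply k κ c x _ hv, h₁, h₂, map_smul, map_smul, norm_mul, norm_mul,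
    Complex.norm_exp_ofReal_mul_I, one_mul, one_mul, mul_one, mul_zero, zero_smul, sub_zero,
    norm_smul κ, mul_pow ‖κ‖, Real.norm_eq_abs κ, sq_abs, hκ_sq]
  have h_young := norm_sub_sq_le_of_pos hη
    (k • covDeriv (oneForm A₀) v (scaleMap k κ (x - c)) (1, 0))
    (((k * κ - c.2) * (x.2 - c.2) - (x.2 - c.2) ^ 2 / 2) •
      (Complex.I * v (scaleMap k κ (x - c))))
  rw [norm_smul, norm_smul _ (Complex.I * _), mul_pow, mul_pow, norm_mul Complex.I, Complex.norm_I,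
    one_mul, Real.norm_eq_abs, Real.norm_eq_abs, sq_abs, sq_abs] at h_young
  linarith [mul_nonneg hη.le (mul_nonneg (sq_nonneg k)
    (sq_nonneg ‖covDeriv (oneForm A₀) v (scaleMap k κ (x - c)) (0, 1)‖))]

theorem IsTestFunction.trialState (hk : 0 < k) (hκ : |κ| = k)
    (hv : IsTestFunction (Metric.ball 0 (ℓ * k / 2)) v) :
    IsTestFunction (Metric.ball c (ℓ / 2)) (trialState k κ c v) := by
  have hκ₀ : κ ≠ 0 := abs_pos.1 (hκ.symm ▸ hk)
  have h_comp : IsTestFunction (Metric.ball c (ℓ / 2)) fun x ↦ v (scaleMap k κ (x - c)) := by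
    refine (hv.comp_homeomorph ((Homeomorph.subRight c).trans
      ((Homeomorph.mulLeft₀ k hk.ne').prodCongr (Homeomorph.mulLeft₀ κ hκ₀)))
      ((scaleMap k κ).contDiff.comp (contDiff_id.sub contDiff_const))).mono fun x hx ↦ ?_
    have hx' : ‖scaleMap k κ (x - c)‖ < ℓ * k / 2 := mem_ball_zero_iff.1 hx
    rw [norm_scaleMap hκ] at hx'
    rw [mem_ball_iff_norm]
    refine lt_of_mul_lt_mul_left (hx'.trans_eq ?_) hk.le
    ring
  exact h_comp.mul_left ((Complex.ofRealCLM.contDiff.comp (contDiff_gaugePhase (k * κ) c)).mul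
    contDiff_const).cexp

theorem glDensity_trialState_le (hm : 0 ≤ m) (hη : η ∈ Ioo 0 1) (hk : 0 < k) (hκ : |κ| = k)
    (hc : |c.2 - k * κ| ≤ ℓ / 2) (hv : IsTestFunction (Metric.ball 0 (ℓ * k / 2)) v) (x : ℝ × ℝ) :
    glDensity Avan m (trialState k κ c v) x ≤
      glDensity A₀ ((1 + η) * m * k ^ 2) v (scaleMap k κ (x - c)) +
        m * (η⁻¹ * ℓ ^ 4 / 2) * ‖v (scaleMap k κ (x - c))‖ ^ 2 := by
  have h_rem : ((k * κ - c.2) * (x.2 - c.2) - (x.2 - c.2) ^ 2 / 2) ^ 2 *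
      ‖v (scaleMap k κ (x - c))‖ ^ 2 ≤ ℓ ^ 4 / 4 * ‖v (scaleMap k κ (x - c))‖ ^ 2 := by
    by_cases hx : x ∈ Metric.ball c (ℓ / 2)
    · gcongr
      exact sq_gauge_remainder_le hc
        ((norm_snd_le (x - c)).trans (mem_ball_iff_norm.1 hx).le)
    · rw [← norm_trialState, (hv.trialState hk hκ).eq_zero hx]
      simp
  have hη_inv : 1 + η⁻¹ ≤ 2 * η⁻¹ := by linarith [one_le_inv₀ hη.1 |>.2 hη.2.le]
  have hη_inv_pos : 0 < η⁻¹ := inv_pos.2 hη.1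
  have h_grad : magGradSq Avan (trialState k κ c v) x ≤
      (1 + η) * k ^ 2 * magGradSq A₀ v (scaleMap k κ (x - c)) +
        2 * η⁻¹ * (ℓ ^ 4 / 4 * ‖v (scaleMap k κ (x - c))‖ ^ 2) := by
    refine (magGradSq_trialState_le hη.1 hκ x (hv.differentiable _)).trans ?_
    gcongr
  have h_mul := mul_le_mul_of_nonneg_left h_grad hm
  rw [glDensity, glDensity, norm_trialState]
  linarith

theorem integral_glDensity_trialState_le (hm : 0 ≤ m) (hη : η ∈ Ioo 0 1) (hk : 0 < k)
    (hκ : |κ| = k) (hc : |c.2 - k * κ| ≤ ℓ / 2)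
    (hv : IsTestFunction (Metric.ball 0 (ℓ * k / 2)) v) :
    ∫ x, glDensity Avan m (trialState k κ c v) x ≤
      (k ^ 2)⁻¹ * (Fsq ((1 + η) * m * k ^ 2) (ℓ * k) v +
        m * (η⁻¹ * ℓ ^ 4 / 2) * ∫ y, ‖v y‖ ^ 2) := by
  have hκ₀ : κ ≠ 0 := abs_pos.1 (hκ.symm ▸ hk)
  have h_det : LinearMap.det (scaleMap k κ : ℝ × ℝ →ₗ[ℝ] ℝ × ℝ) ≠ 0 :=
    (det_scaleMap k κ).symm ▸ mul_ne_zero hk.ne' hκ₀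
  have h_int := hv.integrable_glDensity continuous_A₀ ((1 + η) * m * k ^ 2)
  have h_norm : Integrable fun y ↦ m * (η⁻¹ * ℓ ^ 4 / 2) * ‖v y‖ ^ 2 :=
    hv.integrable (continuous_const.mul (hv.continuous.norm.pow 2)) fun x h _ ↦ by simp [h]
  calc ∫ x, glDensity Avan m (trialState k κ c v) x
      ≤ ∫ x, (glDensity A₀ ((1 + η) * m * k ^ 2) v (scaleMap k κ (x - c)) +
          m * (η⁻¹ * ℓ ^ 4 / 2) * ‖v (scaleMap k κ (x - c))‖ ^ 2) :=
        integral_mono ((hv.trialState hk hκ).integrable_glDensity continuous_Avan m)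
          (integrable_comp_linearMap_sub volume h_det c (h_int.add h_norm))
          (glDensity_trialState_le hm hη hk hκ hc hv)
    _ = |(k * κ)⁻¹| * ∫ y, (glDensity A₀ ((1 + η) * m * k ^ 2) v y +
          m * (η⁻¹ * ℓ ^ 4 / 2) * ‖v y‖ ^ 2) := by
        rw [← det_scaleMap k κ]
        exact integral_comp_linearMap_sub volume h_det c fun y ↦
          glDensity A₀ ((1 + η) * m * k ^ 2) v y + m * (η⁻¹ * ℓ ^ 4 / 2) * ‖v y‖ ^ 2
    _ = _ := by
        rw [integral_add h_int h_norm, integral_const_mul, ← hv.Fsq_eq_integral, abs_inv, abs_mul,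
          hκ, abs_of_pos hk, ← sq]

end TrialState

section StripEnergy

/-- The Dirichlet ground-state energy of the strip functional `𝓔_{L,R}` on `Ω`, over the `C¹`
functions vanishing outside `Ω`. -/
def stripDirichletInf (L R : ℝ) (Ω : Set (ℝ × ℝ)) : ℝ :=
  sInf (Estrip L R '' {w : ℝ × ℝ → ℂ | ContDiff ℝ 1 w ∧ ∀ x ∉ Ω, w x = 0})

variable {L R : ℝ} {Ω : Set (ℝ × ℝ)}

theorem subset_Strip_of_isOpen (hΩ : IsOpen Ω) (h : ∀ x ∈ Ω, |x.1| ≤ R / 2) : Ω ⊆ Strip R := by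
  have h_fst : Prod.fst '' Ω ⊆ Ioo (-R / 2) (R / 2) := by
    rw [← interior_Icc]
    refine interior_maximal (image_subset_iff.2 fun x hx ↦ ?_) (isOpenMap_fst _ hΩ)
    rw [mem_preimage, neg_div]
    exact abs_le.1 (h x hx)
  exact fun x hx ↦ ⟨h_fst (mem_image_of_mem _ hx), mem_univ _⟩

theorem neg_half_mul_measureReal_le_Estrip (hL : 0 < L) (hΩ : MeasurableSet Ω)
    (hΩ_fin : volume Ω ≠ ⊤) (hΩR : Ω ⊆ Strip R) {w : ℝ × ℝ → ℂ} (hw : ∀ x ∉ Ω, w x = 0) :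
    -(1 / 2) * L ^ (-(2 : ℝ) / 3) * volume.real Ω ≤ Estrip L R w := by
  have h_pow : 0 < L ^ (-(2 : ℝ) / 3) := rpow_pos_of_pos hL _
  refine mul_measureReal_le_setIntegral (by linarith) hΩ (measurableSet_Ioo.prod .univ) hΩR
    hΩ_fin (fun x _ ↦ ?_) fun x hx ↦ ?_
  · rw [stripDensity_eq hL, mul_comm]
    gcongr
    exact neg_half_le_glDensity Avan (rpow_nonneg hL.le _) w x
  · simpa [stripDensity, hw x hx.2] using magGradSq_nonneg Avan w x

theorem stripDirichletInf_le (hL : 0 < L) (hΩ : MeasurableSet Ω) (hΩ_fin : volume Ω ≠ ⊤)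
    (hΩR : Ω ⊆ Strip R) {w : ℝ × ℝ → ℂ} (hw : IsTestFunction Ω w) :
    stripDirichletInf L R Ω ≤
      L ^ (-(2 : ℝ) / 3) * ∫ x, glDensity Avan (L ^ ((2 : ℝ) / 3)) w x := by
  have h_energy : Estrip L R w =
      L ^ (-(2 : ℝ) / 3) * ∫ x, glDensity Avan (L ^ ((2 : ℝ) / 3)) w x := by
    rw [Estrip, ← integral_const_mul]
    simp_rw [stripDensity_eq hL]
    refine setIntegral_eq_integral_of_forall_compl_eq_zero fun x hx ↦ ?_
    have hxΩ : x ∉ Ω := fun h ↦ hx (hΩR h)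
    rw [glDensity_eq_zero _ _ (hw.eq_zero hxΩ) (hw.fderiv_eq_zero hxΩ), mul_zero]
  rw [← h_energy]
  exact csInf_le ⟨_, forall_mem_image.2 fun v hv ↦
    neg_half_mul_measureReal_le_Estrip hL hΩ hΩ_fin hΩR hv.2⟩
    ⟨w, ⟨hw.contDiff, fun x ↦ hw.eq_zero⟩, rfl⟩

theorem stripDirichletInf_nonpos (hL : 0 < L) (hΩ : MeasurableSet Ω) (hΩ_fin : volume Ω ≠ ⊤)
    (hΩR : Ω ⊆ Strip R) : stripDirichletInf L R Ω ≤ 0 := by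
  refine (stripDirichletInf_le hL hΩ hΩ_fin hΩR .zero).trans_eq ?_
  rw [integral_eq_zero_of_ae (.of_forall fun x ↦ glDensity_eq_zero _ _ rfl (by simp)), mul_zero]

variable {k κ ℓ η : ℝ} {c : ℝ × ℝ}

theorem stripDirichletInf_ball_le_of_eD_lt (hL : 0 < L) (hℓ : 0 < ℓ) (hη : η ∈ Ioo 0 1)
    (hΩR : Metric.ball c (ℓ / 2) ⊆ Strip R) (hk : 0 < k) (hκ : |κ| = k)
    (hc : |c.2 - k * κ| ≤ ℓ / 2) {a : ℝ}
    (ha : eD ((1 + η) * L ^ ((2 : ℝ) / 3) * k ^ 2) (ℓ * k) < a) :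
    stripDirichletInf L R (Metric.ball c (ℓ / 2)) ≤ L ^ (-(2 : ℝ) / 3) *
      ((k ^ 2)⁻¹ * (a + L ^ ((2 : ℝ) / 3) * (η⁻¹ * ℓ ^ 4 / 2) * (a + 2 * (ℓ * k) ^ 2))) := by
  have hη₀ : 0 < η := hη.1
  obtain ⟨v, hv, hva⟩ := exists_isTestFunction_Fsq_lt (by positivity) ha
  refine (stripDirichletInf_le hL measurableSet_ball measure_ball_lt_top.ne hΩR
    (hv.trialState hk hκ)).trans ?_
  gcongr
  refine (integral_glDensity_trialState_le (by positivity) hη hk hκ hc hv).trans ?_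
  gcongr
  linarith [hv.integral_norm_sq_le_Fsq_add (b := (1 + η) * L ^ ((2 : ℝ) / 3) * k ^ 2)
    (by positivity) (by positivity)]

theorem stripDirichletInf_ball_le_eD (hL : 0 < L) (hℓ : 0 < ℓ) (hη : η ∈ Ioo 0 1)
    (hΩR : Metric.ball c (ℓ / 2) ⊆ Strip R) (hk : 0 < k) (hκ : |κ| = k)
    (hc : |c.2 - k * κ| ≤ ℓ / 2) :
    stripDirichletInf L R (Metric.ball c (ℓ / 2)) ≤ L ^ (-(2 : ℝ) / 3) *
      ((k ^ 2)⁻¹ * eD ((1 + η) * L ^ ((2 : ℝ) / 3) * k ^ 2) (ℓ * k) +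
        L ^ ((2 : ℝ) / 3) * η⁻¹ * ℓ ^ 6) := by
  have hη₀ : 0 < η := hη.1
  set m := L ^ ((2 : ℝ) / 3)
  set e := eD ((1 + η) * m * k ^ 2) (ℓ * k)
  set D := m * (η⁻¹ * ℓ ^ 4 / 2)
  have h_tendsto : Tendsto
      (fun a ↦ L ^ (-(2 : ℝ) / 3) * ((k ^ 2)⁻¹ * (a + D * (a + 2 * (ℓ * k) ^ 2)))) (𝓝[>] e)
      (𝓝 (L ^ (-(2 : ℝ) / 3) * ((k ^ 2)⁻¹ * (e + D * (e + 2 * (ℓ * k) ^ 2))))) :=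
    (Continuous.tendsto (by fun_prop) e).mono_left nhdsWithin_le_nhds
  refine (ge_of_tendsto h_tendsto (eventually_mem_nhdsWithin.mono fun a ha ↦
    stripDirichletInf_ball_le_of_eD_lt hL hℓ hη hΩR hk hκ hc ha)).trans ?_
  gcongr
  have he : e ≤ 0 := eD_nonpos (by positivity) (by positivity)
  calc (k ^ 2)⁻¹ * (e + D * (e + 2 * (ℓ * k) ^ 2))
      ≤ (k ^ 2)⁻¹ * (e + D * (0 + 2 * (ℓ * k) ^ 2)) := by gcongr
    _ = (k ^ 2)⁻¹ * e + m * η⁻¹ * ℓ ^ 6 := by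
        simp only [D]
        field_simp
        ring

end StripEnergy

section UpperBound

variable {g : ℝ → ℝ} {C L R ℓ η B : ℝ} {c : ℝ × ℝ}

theorem exists_ne_zero_forall_abs_le {ρ t : ℝ} (ht : ρ < |t|) (hρ : 0 ≤ ρ) :
    ∃ B ≠ 0, |t - B| ≤ ρ ∧ ∀ y, |y - t| ≤ ρ → |B| ≤ |y| := by
  rcases lt_abs.1 ht with h | h
  · refine ⟨t - ρ, by linarith, by rw [sub_sub_cancel, abs_of_nonneg hρ], fun y hy ↦ ?_⟩
    rw [abs_of_pos (by linarith : 0 < t - ρ)]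
    linarith [le_abs_self y, abs_le.1 hy]
  · refine ⟨t + ρ, by linarith, by rw [sub_add_cancel_left, abs_neg, abs_of_nonneg hρ],
      fun y hy ↦ ?_⟩
    rw [abs_of_neg (by linarith : t + ρ < 0)]
    linarith [neg_le_abs y, abs_le.1 hy]

theorem half_lt_of_one_div_sq_le {t : ℝ} (hℓ : ℓ ∈ Ioo 0 1) (ht : 1 / ℓ ^ 2 ≤ t) : ℓ / 2 < t := by
  have h_one : 1 < 1 / ℓ ^ 2 :=
    one_lt_one_div (pow_pos hℓ.1 2) (pow_lt_one₀ hℓ.1.le hℓ.2 two_ne_zero)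
  linarith [hℓ.2]

theorem IsLimitG.mul_sq_le_setIntegral_ball (hg : IsLimitG g) {a : ℝ} (ha : 0 < a) (hℓ : 0 ≤ ℓ)
    (hB₀ : B ≠ 0) (hB : ∀ x ∈ Metric.ball c (ℓ / 2), |B| ≤ |x.2|) :
    g (a * |B|) * ℓ ^ 2 ≤ ∫ x in Metric.ball c (ℓ / 2), g (a * |x.2|) := by
  have h_le := mul_measureReal_le_setIntegral (hg.nonpos (b := a * |B|) (by positivity))
    measurableSet_ball measurableSet_ball Subset.rfl measure_ball_lt_top.ne
    (fun x hx ↦ hg.mono (by positivity) (mul_le_mul_of_nonneg_left (hB x hx) ha.le))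
    (f := fun x : ℝ × ℝ ↦ g (a * |x.2|)) (t := Metric.ball c (ℓ / 2)) (μ := volume) (by simp)
  rwa [volume_real_ball_prod c (by positivity), mul_div_cancel₀ ℓ two_ne_zero] at h_le

theorem stripDirichletInf_ball_le_of_eD_le
    (hC : ∀ b > 0, ∀ r ≥ 0, eD b r ≤ r ^ 2 * g b + C * (r * √b)) (hC₀ : 0 ≤ C) (hL : 0 < L)
    (hℓ : 0 < ℓ) (hη : η ∈ Ioo 0 1) (hΩR : Metric.ball c (ℓ / 2) ⊆ Strip R) (hB₀ : B ≠ 0)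
    (hB : |c.2 - B| ≤ ℓ / 2) :
    stripDirichletInf L R (Metric.ball c (ℓ / 2)) ≤ L ^ (-(2 : ℝ) / 3) *
      (g ((1 + η) * L ^ ((2 : ℝ) / 3) * |B|) * ℓ ^ 2 + 2 * C * ℓ * L ^ ((1 : ℝ) / 3) +
        L ^ ((2 : ℝ) / 3) * η⁻¹ * ℓ ^ 6) := by
  have hη₀ : 0 < η := hη.1
  have hB_pos : 0 < |B| := abs_pos.2 hB₀
  have hk : 0 < √|B| := Real.sqrt_pos.2 hB_pos
  have h_inf := stripDirichletInf_ball_le_eD (κ := B / √|B|) hL hℓ hη hΩR hk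
    (by rw [abs_div, abs_of_pos hk, Real.div_sqrt]) (by rwa [mul_div_cancel₀ B hk.ne'])
  rw [Real.sq_sqrt hB_pos.le] at h_inf
  set b := (1 + η) * L ^ ((2 : ℝ) / 3) * |B| with hb
  have hb_sqrt : √b ≤ 2 * L ^ ((1 : ℝ) / 3) * √|B| := by
    rw [Real.sqrt_le_left (by positivity), mul_pow, mul_pow, Real.sq_sqrt hB_pos.le,
      ← Real.rpow_mul_natCast hL.le, hb]
    norm_num
    gcongr
    linarith [hη.2]
  refine h_inf.trans ?_
  gcongr
  calc |B|⁻¹ * eD b (ℓ * √|B|)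
      ≤ |B|⁻¹ * ((ℓ * √|B|) ^ 2 * g b + C * (ℓ * √|B| * (2 * L ^ ((1 : ℝ) / 3) * √|B|))) := by
        gcongr
        exact (hC b (by positivity) _ (by positivity)).trans (by gcongr)
    _ = |B|⁻¹ * |B| * (g b * ℓ ^ 2 + 2 * C * ℓ * L ^ ((1 : ℝ) / 3)) := by
        linear_combination |B|⁻¹ * (g b * ℓ ^ 2 + 2 * C * ℓ * L ^ ((1 : ℝ) / 3)) *
          Real.sq_sqrt hB_pos.le
    _ = g b * ℓ ^ 2 + 2 * C * ℓ * L ^ ((1 : ℝ) / 3) := by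
        rw [inv_mul_cancel₀ hB_pos.ne', one_mul]

theorem mul_rpow_add_rpow_mul_le (hC : 0 ≤ C) (hL : 0 < L) (hL₁ : L ≤ 1) (hℓ : 0 < ℓ)
    (hη : 0 < η) :
    2 * C * ℓ * L ^ ((1 : ℝ) / 3) + L ^ ((2 : ℝ) / 3) * η⁻¹ * ℓ ^ 6 ≤
      (2 * C + 1) * (ℓ⁻¹ * L ^ ((1 : ℝ) / 3) + η⁻¹ * ℓ ^ 4) * ℓ ^ 2 := by
  have hL_pow : L ^ ((2 : ℝ) / 3) ≤ 1 := rpow_le_one hL.le hL₁ (by norm_num)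
  have h_nonneg : 0 ≤ L ^ ((1 : ℝ) / 3) * ℓ + 2 * C * η⁻¹ * ℓ ^ 6 := by positivity
  calc 2 * C * ℓ * L ^ ((1 : ℝ) / 3) + L ^ ((2 : ℝ) / 3) * η⁻¹ * ℓ ^ 6
      ≤ 2 * C * ℓ * L ^ ((1 : ℝ) / 3) + 1 * η⁻¹ * ℓ ^ 6 := by gcongr
    _ ≤ 2 * C * ℓ * L ^ ((1 : ℝ) / 3) + 1 * η⁻¹ * ℓ ^ 6 +
        (L ^ ((1 : ℝ) / 3) * ℓ + 2 * C * η⁻¹ * ℓ ^ 6) := le_add_of_nonneg_right h_nonneg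
    _ = (2 * C + 1) * (ℓ⁻¹ * L ^ ((1 : ℝ) / 3) + η⁻¹ * ℓ ^ 4) * ℓ ^ 2 := by
      field_simp
      ring

theorem one_le_inv_mul_rpow_add_inv_mul_pow (hL : 1 ≤ L) (hℓ : 0 < ℓ) (hη : η ∈ Ioo 0 1) :
    1 ≤ ℓ⁻¹ * L ^ ((1 : ℝ) / 3) + η⁻¹ * ℓ ^ 4 := by
  have hη₀ : 0 < η := hη.1
  rcases le_total ℓ 1 with h | h
  · have h_fst : 1 ≤ ℓ⁻¹ * L ^ ((1 : ℝ) / 3) :=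
      one_le_mul_of_one_le_of_one_le ((one_le_inv₀ hℓ).2 h) (one_le_rpow hL (by norm_num))
    have h_snd : 0 ≤ η⁻¹ * ℓ ^ 4 := by positivity
    linarith
  · have h_fst : 0 ≤ ℓ⁻¹ * L ^ ((1 : ℝ) / 3) := by positivity
    have h_snd : 1 ≤ η⁻¹ * ℓ ^ 4 :=
      one_le_mul_of_one_le_of_one_le ((one_le_inv₀ hη₀).2 hη.2.le) (one_le_pow₀ h)
    linarith

theorem lemma_upper_bound_general (g : ℝ → ℝ) (hg : IsLimitG g) :
    ∃ C > (0 : ℝ), ∀ R L : ℝ, 0 < L → ∀ ℓ > 0, ∀ η ∈ Ioo (0 : ℝ) 1, ∀ c : ℝ × ℝ,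
      Metric.ball c (ℓ / 2) ⊆ Strip R → ℓ / 2 < |c.2| →
      stripDirichletInf L R (Metric.ball c (ℓ / 2)) ≤
        L ^ (-(2 : ℝ) / 3) *
          (∫ x in Metric.ball c (ℓ / 2), g ((1 + η) * L ^ ((2 : ℝ) / 3) * |x.2|)) +
        C * L ^ (-(2 : ℝ) / 3) * (ℓ⁻¹ * L ^ ((1 : ℝ) / 3) + η⁻¹ * ℓ ^ 4) * ℓ ^ 2 := by
  obtain ⟨C, hC, h_eD⟩ := exists_eD_le_sq_mul_add
  refine ⟨2 * C + 1, by positivity, fun R L hL ℓ hℓ η hη c hΩR hc ↦ ?_⟩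
  have hη₀ : 0 < η := hη.1
  obtain ⟨B, hB₀, hcB, hB⟩ := exists_ne_zero_forall_abs_le hc (by positivity)
  have h_int := hg.mul_sq_le_setIntegral_ball (c := c) (a := (1 + η) * L ^ ((2 : ℝ) / 3))
    (by positivity) hℓ.le hB₀ fun x hx ↦
      hB x.2 ((norm_snd_le (x - c)).trans (mem_ball_iff_norm.1 hx).le)
  set I := ∫ x in Metric.ball c (ℓ / 2), g ((1 + η) * L ^ ((2 : ℝ) / 3) * |x.2|)
  suffices h : stripDirichletInf L R (Metric.ball c (ℓ / 2)) ≤ L ^ (-(2 : ℝ) / 3) *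
      (I + (2 * C + 1) * (ℓ⁻¹ * L ^ ((1 : ℝ) / 3) + η⁻¹ * ℓ ^ 4) * ℓ ^ 2) by
    linarith
  rcases le_total L 1 with hL₁ | hL₁
  · refine (stripDirichletInf_ball_le_of_eD_le (h_eD g hg) hC.le hL hℓ hη hΩR hB₀ hcB).trans
      (mul_le_mul_of_nonneg_left ?_ (by positivity))
    linarith [mul_rpow_add_rpow_mul_le hC.le hL hL₁ hℓ hη₀]
  · have h_half := hg.neg_half_le (b := (1 + η) * L ^ ((2 : ℝ) / 3) * |B|) (by positivity)
    have h_err := one_le_inv_mul_rpow_add_inv_mul_pow hL₁ hℓ hη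
    refine (stripDirichletInf_nonpos hL measurableSet_ball measure_ball_lt_top.ne hΩR).trans
      (mul_nonneg (by positivity) ?_)
    calc 0 ≤ -(1 / 2) * ℓ ^ 2 + 1 * 1 * ℓ ^ 2 := by linarith [sq_nonneg ℓ]
      _ ≤ g ((1 + η) * L ^ ((2 : ℝ) / 3) * |B|) * ℓ ^ 2 +
          (2 * C + 1) * (ℓ⁻¹ * L ^ ((1 : ℝ) / 3) + η⁻¹ * ℓ ^ 4) * ℓ ^ 2 := by
        gcongr
        linarith
      _ ≤ _ := by gcongr

end UpperBound

/-- The key upper-bound lemma on a small square away from the zero set. -/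
theorem lemma_upper_bound (g : ℝ → ℝ) (hg : IsLimitG g) :
    ∃ C > (0:ℝ), ∀ R ≥ (1:ℝ), ∀ L : ℝ, 0 < L → ∀ ℓ ∈ Ioo (0:ℝ) 1, ∀ η ∈ Ioo (0:ℝ) 1,
      ∀ c : ℝ × ℝ,
      (Ioo (c.1 - ℓ/2) (c.1 + ℓ/2) ×ˢ Ioo (c.2 - ℓ/2) (c.2 + ℓ/2) ⊆
        {x : ℝ × ℝ | |x.1| ≤ R/2 ∧ 1/ℓ^2 ≤ |x.2|}) →
      sInf (Estrip L R '' {w : ℝ × ℝ → ℂ | ContDiff ℝ 1 w ∧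
          ∀ x ∉ Ioo (c.1 - ℓ/2) (c.1 + ℓ/2) ×ˢ Ioo (c.2 - ℓ/2) (c.2 + ℓ/2), w x = 0}) ≤
        L ^ (-(2:ℝ)/3) *
          (∫ x in Ioo (c.1 - ℓ/2) (c.1 + ℓ/2) ×ˢ Ioo (c.2 - ℓ/2) (c.2 + ℓ/2),
            g ((1 + η) * L ^ ((2:ℝ)/3) * |x.2|)) +
        C * L ^ (-(2:ℝ)/3) * (ℓ⁻¹ * L ^ ((1:ℝ)/3) + η⁻¹ * ℓ ^ 4) * ℓ ^ 2 := by
  obtain ⟨C, hC, h⟩ := lemma_upper_bound_general g hg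
  refine ⟨C, hC, fun R _ L hL ℓ hℓ η hη c hQ ↦ ?_⟩
  rw [Ioo_prod_Ioo_eq_ball] at hQ ⊢
  exact h R L hL ℓ hℓ.1 η hη c (subset_Strip_of_isOpen Metric.isOpen_ball fun x hx ↦ (hQ hx).1)
    (half_lt_of_one_div_sq_le hℓ (hQ (Metric.mem_ball_self (half_pos hℓ.1))).2)

end
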